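/- arXiv:2006.09210 — 4 statements merged into one kernel-verified Lean document; each statement's English description precedes it below -/
import Mathlib

section
/- Let (H,α,R) be a quasitriangular Hom-Hopf algebra, (B,β,⟨|⟩) a coquasitriangular Hom-Hopf algebra, and (U,μ_U),(V,ν_V),(W,ω_W) (H,B)-Hom-Long dimodules. With the braiding C_{M,N}(m⊗n)=⟨m₋₁|n₋₁⟩ R²·ν_N⁻²(n₀)⊗R¹·μ_M⁻²(m₀) and associator a_{U,V,W}:(U⊗V)⊗W→U⊗(V⊗W), (u⊗v)⊗w↦μ_U⁻¹(u)⊗(v⊗ω_W(w)), the categorical quantum Yang-Baxter equation holds: (id_W⊗C_{U,V})∘a_{W,U,V}∘(C_{U,W}⊗id_V)∘a⁻¹_{U,W,V}∘(id_U⊗C_{V,W})∘a_{U,V,W} = a_{W,V,U}∘(C_{V,W}⊗id_U)∘a⁻¹_{V,W,U}∘(id_V⊗C_{U,W})∘a_{V,U,W}∘(C_{U,V}⊗id_W) as linear maps (U⊗V)⊗W→W⊗(V⊗U). -/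
/-!
Every twist can be removed. On a Hom-Long dimodule `(M, μ)` the maps `h ⊗ m ↦ h · μ⁻¹(m)` and
`m ↦ m₋₁ ⊗ μ⁻¹(m₀)` are an ordinary action of `H` with product `α⁻¹(hg)` and an ordinary coaction of
`B` with comultiplication `Δ ∘ β⁻¹`, and the action is by comodule endomorphisms. In these terms
(`braidL_eq`) the braiding is `τ ∘ r ∘ f`, with `r(m ⊗ n) = R¹m ⊗ R²n` and
`f(m ⊗ n) = ⟨m₋₁|n₋₁⟩ m₀ ⊗ n₀`.

Write `F = r ∘ f`. On `U ⊗ V ⊗ W` the structure maps in the associators cancel up to conjugation by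
the one of `W` (`lhs_eq`, `rhs_eq`), so the claim becomes `F₁₂F₁₃F₂₃ = F₂₃F₁₃F₁₂`. Since the `r`'s
commute with the `f`'s (`combined_yang_baxter`), this splits into two equations. For `r` it is
`R₁₂R₁₃R₂₃ = R₁₂(Δ ⊗ id)(R) = (Δᵒᵖ ⊗ id)(R)R₁₂ = R₂₃R₁₃R₁₂` (`R_yang_baxter`). For `f`
(`form_yang_baxter`, `scalarL_eq_scalarR`) it is
`⟨y₁|z₁⟩⟨x₁|z₂⟩⟨x₂|y₂⟩ = ⟨x₁y₁|z⟩⟨x₂|y₂⟩ = ⟨x₁|y₁⟩⟨y₂x₂|z⟩ = ⟨x₁|y₁⟩⟨x₂|z₁⟩⟨y₂|z₂⟩`,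
written here without the powers of `β`.
-/

open TensorProduct

/-- A Hom-bialgebra `(H, α)` over a field `k`. -/
structure HomBialgebra (k : Type*) [Field k] (H : Type*) [AddCommGroup H] [Module k H] where
  mul : H →ₗ[k] H →ₗ[k] H
  one : H
  comul : H →ₗ[k] H ⊗[k] H
  counit : H →ₗ[k] k
  auto : H ≃ₗ[k] H
  auto_mul : ∀ h h' : H, auto (mul h h') = mul (auto h) (auto h')
  auto_one : auto one = one
  hom_assoc : ∀ h h' h'' : H, mul (auto h) (mul h' h'') = mul (mul h h') (auto h'')
  mul_one' : ∀ h : H, mul h one = auto h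
  one_mul' : ∀ h : H, mul one h = auto h
  comul_auto : ∀ h : H,
    comul (auto h) = TensorProduct.map auto.toLinearMap auto.toLinearMap (comul h)
  counit_auto : ∀ h : H, counit (auto h) = counit h
  hom_coassoc : ∀ h : H,
    TensorProduct.map auto.toLinearMap comul (comul h)
      = TensorProduct.assoc k H H H (TensorProduct.map comul auto.toLinearMap (comul h))
  counit_comul : ∀ h : H,
    TensorProduct.lid k H (TensorProduct.map counit (LinearMap.id : H →ₗ[k] H) (comul h)) = auto h
  comul_counit : ∀ h : H,
    TensorProduct.rid k H (TensorProduct.map (LinearMap.id : H →ₗ[k] H) counit (comul h)) = auto h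
  comul_mul : ∀ h h' : H,
    comul (mul h h')
      = TensorProduct.map (TensorProduct.lift mul) (TensorProduct.lift mul)
          (TensorProduct.tensorTensorTensorComm k H H H H (comul h ⊗ₜ[k] comul h'))
  comul_one : comul one = one ⊗ₜ[k] one
  counit_mul : ∀ h h' : H, counit (mul h h') = counit h * counit h'
  counit_one : counit one = 1

/-- A Hom-Hopf algebra: a Hom-bialgebra with an antipode. -/
structure HomHopf (k : Type*) [Field k] (H : Type*) [AddCommGroup H] [Module k H]
    extends HomBialgebra k H where
  antipode : H →ₗ[k] H
  antipode_left : ∀ h : H,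
    TensorProduct.lift mul (TensorProduct.map antipode (LinearMap.id : H →ₗ[k] H) (comul h))
      = counit h • one
  antipode_right : ∀ h : H,
    TensorProduct.lift mul (TensorProduct.map (LinearMap.id : H →ₗ[k] H) antipode (comul h))
      = counit h • one
  antipode_auto : ∀ h : H, antipode (auto h) = auto (antipode h)

/-- A quasitriangular Hom-Hopf algebra `(H, α, R)`. -/
structure QTHomHopf (k : Type*) [Field k] (H : Type*) [AddCommGroup H] [Module k H]
    extends HomHopf k H where
  R : H ⊗[k] H
  qha1a : TensorProduct.lid k H (TensorProduct.map counit (LinearMap.id : H →ₗ[k] H) R) = one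
  qha1b : TensorProduct.rid k H (TensorProduct.map (LinearMap.id : H →ₗ[k] H) counit R) = one
  qha2 : TensorProduct.map comul auto.toLinearMap R
      = TensorProduct.map (TensorProduct.map auto.toLinearMap auto.toLinearMap)
          (TensorProduct.lift mul)
          (TensorProduct.tensorTensorTensorComm k H H H H (R ⊗ₜ[k] R))
  qha3 : TensorProduct.map auto.toLinearMap comul R
      = TensorProduct.map (TensorProduct.lift mul)
          ((TensorProduct.comm k H H).toLinearMap ∘ₗ
            TensorProduct.map auto.toLinearMap auto.toLinearMap)
          (TensorProduct.tensorTensorTensorComm k H H H H (R ⊗ₜ[k] R))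
  qha4 : ∀ h : H,
    TensorProduct.map (TensorProduct.lift mul) (TensorProduct.lift mul)
        (TensorProduct.tensorTensorTensorComm k H H H H
          ((TensorProduct.comm k H H (comul h)) ⊗ₜ[k] R))
      = TensorProduct.map (TensorProduct.lift mul) (TensorProduct.lift mul)
          (TensorProduct.tensorTensorTensorComm k H H H H (R ⊗ₜ[k] comul h))
  qha5 : TensorProduct.map auto.toLinearMap auto.toLinearMap R = R

/-- Triangularity: `R⁻¹ = R² ⊗ R¹`, i.e. `r²R¹ ⊗ r¹R² = 1 ⊗ 1`. -/
def QTHomHopf.IsTriangular {k : Type*} [Field k] {H : Type*} [AddCommGroup H] [Module k H]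
    (HQ : QTHomHopf k H) : Prop :=
  TensorProduct.map (TensorProduct.lift HQ.mul) (TensorProduct.lift HQ.mul)
      (TensorProduct.tensorTensorTensorComm k H H H H
        ((TensorProduct.comm k H H HQ.R) ⊗ₜ[k] HQ.R))
    = HQ.one ⊗ₜ[k] HQ.one

/-- A coquasitriangular Hom-Hopf algebra `(B, β, ⟨|⟩)`. -/
structure CQTHomHopf (k : Type*) [Field k] (B : Type*) [AddCommGroup B] [Module k B]
    extends HomHopf k B where
  form : B →ₗ[k] B →ₗ[k] k
  cha1 : ∀ h g l : B, form (mul h g) (auto l)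
      = LinearMap.mul' k k (TensorProduct.map (form (auto g)) (form (auto h)) (comul l))
  cha2 : ∀ h g l : B, form (auto h) (mul g l)
      = LinearMap.mul' k k
          (TensorProduct.map (form.flip (auto g)) (form.flip (auto l)) (comul h))
  cha3 : ∀ h g : B,
    TensorProduct.lid k B (TensorProduct.map (TensorProduct.lift form)
        ((TensorProduct.lift mul) ∘ₗ (TensorProduct.comm k B B).toLinearMap)
        (TensorProduct.tensorTensorTensorComm k B B B B (comul h ⊗ₜ[k] comul g)))
      = TensorProduct.rid k B
          (TensorProduct.map (TensorProduct.lift mul) (TensorProduct.lift form)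
            (TensorProduct.tensorTensorTensorComm k B B B B (comul h ⊗ₜ[k] comul g)))
  cha4a : ∀ h : B, form one h = counit h
  cha4b : ∀ h : B, form h one = counit h
  cha5 : ∀ h g : B, form (auto h) (auto g) = form h g

/-- Cotriangularity: `⟨h₁|g₁⟩⟨g₂|h₂⟩ = ε(h)ε(g)`. -/
def CQTHomHopf.IsCotriangular {k : Type*} [Field k] {B : Type*} [AddCommGroup B] [Module k B]
    (BC : CQTHomHopf k B) : Prop :=
  ∀ h g : B,
    LinearMap.mul' k k (TensorProduct.map (TensorProduct.lift BC.form)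
        ((TensorProduct.lift BC.form) ∘ₗ (TensorProduct.comm k B B).toLinearMap)
        (TensorProduct.tensorTensorTensorComm k B B B B (BC.comul h ⊗ₜ[k] BC.comul g)))
      = BC.counit h * BC.counit g

/-- A left Hom-module over a Hom-bialgebra `(H, α)`. -/
structure HomModule {k : Type*} [Field k] {H : Type*} [AddCommGroup H] [Module k H]
    (HA : HomBialgebra k H) (M : Type*) [AddCommGroup M] [Module k M] where
  act : H →ₗ[k] M →ₗ[k] M
  auto : M ≃ₗ[k] M
  auto_act : ∀ (h : H) (m : M), auto (act h m) = act (HA.auto h) (auto m)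
  act_act : ∀ (h h' : H) (m : M), act (HA.auto h) (act h' m) = act (HA.mul h h') (auto m)
  one_act : ∀ m : M, act HA.one m = auto m

/-- A left Hom-comodule over a Hom-bialgebra `(B, β)`. -/
structure HomComodule {k : Type*} [Field k] {B : Type*} [AddCommGroup B] [Module k B]
    (BA : HomBialgebra k B) (M : Type*) [AddCommGroup M] [Module k M] where
  coact : M →ₗ[k] B ⊗[k] M
  auto : M ≃ₗ[k] M
  coact_auto : ∀ m : M,
    coact (auto m) = TensorProduct.map BA.auto.toLinearMap auto.toLinearMap (coact m)
  counit_coact : ∀ m : M,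
    TensorProduct.lid k M (TensorProduct.map BA.counit (LinearMap.id : M →ₗ[k] M) (coact m))
      = auto m
  hom_coassoc : ∀ m : M,
    TensorProduct.map BA.auto.toLinearMap coact (coact m)
      = TensorProduct.assoc k B B M
          (TensorProduct.map BA.comul auto.toLinearMap (coact m))

/-- A Hom-algebra `(A, γ)`. -/
structure HomAlgebra (k : Type*) [Field k] (A : Type*) [AddCommGroup A] [Module k A] where
  mul : A →ₗ[k] A →ₗ[k] A
  one : A
  auto : A ≃ₗ[k] A
  auto_mul : ∀ a a' : A, auto (mul a a') = mul (auto a) (auto a')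
  auto_one : auto one = one
  hom_assoc : ∀ a a' a'' : A, mul (auto a) (mul a' a'') = mul (mul a a') (auto a'')
  mul_one' : ∀ a : A, mul a one = auto a
  one_mul' : ∀ a : A, mul one a = auto a

/-- A left Hom-module over a Hom-algebra `(A, γ)`. -/
structure HomModuleAlg {k : Type*} [Field k] {A : Type*} [AddCommGroup A] [Module k A]
    (AA : HomAlgebra k A) (M : Type*) [AddCommGroup M] [Module k M] where
  act : A →ₗ[k] M →ₗ[k] M
  auto : M ≃ₗ[k] M
  auto_act : ∀ (a : A) (m : M), auto (act a m) = act (AA.auto a) (auto m)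
  act_act : ∀ (a a' : A) (m : M), act (AA.auto a) (act a' m) = act (AA.mul a a') (auto m)
  one_act : ∀ m : M, act AA.one m = auto m

/-- An `(H, B)`-Hom-Long dimodule. -/
structure LongDimodule {k : Type*} [Field k] {H B : Type*}
    [AddCommGroup H] [Module k H] [AddCommGroup B] [Module k B]
    (HA : HomBialgebra k H) (BA : HomBialgebra k B)
    (M : Type*) [AddCommGroup M] [Module k M] where
  act : H →ₗ[k] M →ₗ[k] M
  coact : M →ₗ[k] B ⊗[k] M
  auto : M ≃ₗ[k] M
  auto_act : ∀ (h : H) (m : M), auto (act h m) = act (HA.auto h) (auto m)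
  act_act : ∀ (h h' : H) (m : M), act (HA.auto h) (act h' m) = act (HA.mul h h') (auto m)
  one_act : ∀ m : M, act HA.one m = auto m
  coact_auto : ∀ m : M,
    coact (auto m) = TensorProduct.map BA.auto.toLinearMap auto.toLinearMap (coact m)
  counit_coact : ∀ m : M,
    TensorProduct.lid k M (TensorProduct.map BA.counit (LinearMap.id : M →ₗ[k] M) (coact m))
      = auto m
  hom_coassoc : ∀ m : M,
    TensorProduct.map BA.auto.toLinearMap coact (coact m)
      = TensorProduct.assoc k B B M
          (TensorProduct.map BA.comul auto.toLinearMap (coact m))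
  compat : ∀ (h : H) (m : M),
    coact (act h m)
      = TensorProduct.map BA.auto.toLinearMap (act (HA.auto h)) (coact m)

section Helpers

variable {k H B M N : Type*} [Field k]
variable [AddCommGroup H] [Module k H] [AddCommGroup B] [Module k B]
variable [AddCommGroup M] [Module k M] [AddCommGroup N] [Module k N]

/-- The diagonal Hom-action on a tensor product: `h · (m ⊗ n) = h₁·m ⊗ h₂·n`. -/
noncomputable def tAct (comul : H →ₗ[k] H ⊗[k] H)
    (actM : H →ₗ[k] M →ₗ[k] M) (actN : H →ₗ[k] N →ₗ[k] N) :
    H →ₗ[k] (M ⊗[k] N) →ₗ[k] (M ⊗[k] N) :=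
  TensorProduct.curry
    ((TensorProduct.map (TensorProduct.lift actM) (TensorProduct.lift actN)) ∘ₗ
      (TensorProduct.tensorTensorTensorComm k H H M N).toLinearMap ∘ₗ
      (TensorProduct.map comul (LinearMap.id : M ⊗[k] N →ₗ[k] M ⊗[k] N)))

/-- The Hom-coaction on a tensor product: `ρ(m ⊗ n) = β⁻²(m₋₁ n₋₁) ⊗ (m₀ ⊗ n₀)`;
here `bInv2` stands for `β⁻²`. -/
noncomputable def tCoact (mulB : B →ₗ[k] B →ₗ[k] B) (bInv2 : B →ₗ[k] B)
    (coactM : M →ₗ[k] B ⊗[k] M) (coactN : N →ₗ[k] B ⊗[k] N) :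
    (M ⊗[k] N) →ₗ[k] B ⊗[k] (M ⊗[k] N) :=
  (TensorProduct.map (bInv2 ∘ₗ TensorProduct.lift mulB)
      (LinearMap.id : M ⊗[k] N →ₗ[k] M ⊗[k] N)) ∘ₗ
    (TensorProduct.tensorTensorTensorComm k B M B N).toLinearMap ∘ₗ
    (TensorProduct.map coactM coactN)

/-- `m ⊗ n ↦ R² · aM⁻¹(n) ⊗ R¹ · aN⁻¹(m)` (quasitriangular part of the Long braiding). -/
noncomputable def braidQT (R : H ⊗[k] H)
    (actM : H →ₗ[k] M →ₗ[k] M) (actN : H →ₗ[k] N →ₗ[k] N)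
    (aM : M ≃ₗ[k] M) (aN : N ≃ₗ[k] N) : M ⊗[k] N →ₗ[k] N ⊗[k] M :=
  TensorProduct.map (TensorProduct.lift actN) (TensorProduct.lift actM) ∘ₗ
    (TensorProduct.tensorTensorTensorComm k H H N M).toLinearMap ∘ₗ
    TensorProduct.mk k (H ⊗[k] H) (N ⊗[k] M) (TensorProduct.comm k H H R) ∘ₗ
    (TensorProduct.comm k M N).toLinearMap ∘ₗ
    TensorProduct.map aM.symm.toLinearMap aN.symm.toLinearMap

/-- `m ⊗ n ↦ ⟨m₋₁|n₋₁⟩ aN⁻¹(n₀) ⊗ aM⁻¹(m₀)` (coquasitriangular braiding). -/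
noncomputable def braidCQT (form : B →ₗ[k] B →ₗ[k] k)
    (coactM : M →ₗ[k] B ⊗[k] M) (coactN : N →ₗ[k] B ⊗[k] N)
    (aM : M ≃ₗ[k] M) (aN : N ≃ₗ[k] N) : M ⊗[k] N →ₗ[k] N ⊗[k] M :=
  (TensorProduct.comm k M N).toLinearMap ∘ₗ
    TensorProduct.map aM.symm.toLinearMap aN.symm.toLinearMap ∘ₗ
    (TensorProduct.lid k (M ⊗[k] N)).toLinearMap ∘ₗ
    TensorProduct.map (TensorProduct.lift form)
      (LinearMap.id : M ⊗[k] N →ₗ[k] M ⊗[k] N) ∘ₗ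
    (TensorProduct.tensorTensorTensorComm k B M B N).toLinearMap ∘ₗ
    TensorProduct.map coactM coactN

/-- The Long-dimodule braiding
`C(m ⊗ n) = ⟨m₋₁|n₋₁⟩ R² · aN⁻²(n₀) ⊗ R¹ · aM⁻²(m₀)`. -/
noncomputable def braidL (R : H ⊗[k] H) (form : B →ₗ[k] B →ₗ[k] k)
    (actM : H →ₗ[k] M →ₗ[k] M) (actN : H →ₗ[k] N →ₗ[k] N)
    (coactM : M →ₗ[k] B ⊗[k] M) (coactN : N →ₗ[k] B ⊗[k] N)
    (aM : M ≃ₗ[k] M) (aN : N ≃ₗ[k] N) : M ⊗[k] N →ₗ[k] N ⊗[k] M :=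
  braidQT R actM actN (aM.trans aM) (aN.trans aN) ∘ₗ
    (TensorProduct.lid k (M ⊗[k] N)).toLinearMap ∘ₗ
    TensorProduct.map (TensorProduct.lift form)
      (LinearMap.id : M ⊗[k] N →ₗ[k] M ⊗[k] N) ∘ₗ
    (TensorProduct.tensorTensorTensorComm k B M B N).toLinearMap ∘ₗ
    TensorProduct.map coactM coactN

/-- The action of `H ⊗ B` on a Long dimodule:
`(h ⊗ x) ⇀ m = ⟨x|m₋₁⟩ α⁻³(h) · μ⁻¹(m₀)`; `aInv3` stands for `α⁻³`, `muInv` for `μ⁻¹`. -/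
noncomputable def actHB (form : B →ₗ[k] B →ₗ[k] k) (aInv3 : H →ₗ[k] H)
    (act : H →ₗ[k] M →ₗ[k] M) (coact : M →ₗ[k] B ⊗[k] M) (muInv : M →ₗ[k] M) :
    (H ⊗[k] B) →ₗ[k] M →ₗ[k] M :=
  TensorProduct.curry
    ((TensorProduct.lid k M).toLinearMap ∘ₗ
      TensorProduct.map (TensorProduct.lift form)
        (TensorProduct.lift act ∘ₗ TensorProduct.map aInv3 muInv) ∘ₗ
      (TensorProduct.tensorTensorTensorComm k B H B M).toLinearMap ∘ₗ
      TensorProduct.map (TensorProduct.comm k H B).toLinearMap coact)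

/-- The coaction of `H ⊗ B` on a Long dimodule:
`ρ̄(m) = (R² ⊗ β⁻³(m₋₁)) ⊗ (R¹ · μ⁻¹(m₀))`; `bInv3` stands for `β⁻³`. -/
noncomputable def coactHB (R : H ⊗[k] H) (bInv3 : B →ₗ[k] B)
    (act : H →ₗ[k] M →ₗ[k] M) (coact : M →ₗ[k] B ⊗[k] M) (muInv : M →ₗ[k] M) :
    M →ₗ[k] (H ⊗[k] B) ⊗[k] M :=
  TensorProduct.map (TensorProduct.map (LinearMap.id : H →ₗ[k] H) bInv3)
      (TensorProduct.lift act ∘ₗ TensorProduct.map (LinearMap.id : H →ₗ[k] H) muInv) ∘ₗ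
    (TensorProduct.tensorTensorTensorComm k H H B M).toLinearMap ∘ₗ
    TensorProduct.mk k (H ⊗[k] H) (B ⊗[k] M) (TensorProduct.comm k H H R) ∘ₗ
    coact

end Helpers

section Assoc

variable {k U V W : Type*} [Field k]
variable [AddCommGroup U] [Module k U] [AddCommGroup V] [Module k V] [AddCommGroup W] [Module k W]

/-- The Hom-associator `(u ⊗ v) ⊗ w ↦ aU⁻¹(u) ⊗ (v ⊗ aW(w))`. -/
noncomputable def assocL (aU : U ≃ₗ[k] U) (aW : W ≃ₗ[k] W) :
    (U ⊗[k] V) ⊗[k] W →ₗ[k] U ⊗[k] (V ⊗[k] W) :=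
  TensorProduct.map aU.symm.toLinearMap
      (TensorProduct.map (LinearMap.id : V →ₗ[k] V) aW.toLinearMap) ∘ₗ
    (TensorProduct.assoc k U V W).toLinearMap

/-- The inverse Hom-associator `u ⊗ (v ⊗ w) ↦ (aU(u) ⊗ v) ⊗ aW⁻¹(w)`. -/
noncomputable def assocLinv (aU : U ≃ₗ[k] U) (aW : W ≃ₗ[k] W) :
    U ⊗[k] (V ⊗[k] W) →ₗ[k] (U ⊗[k] V) ⊗[k] W :=
  (TensorProduct.assoc k U V W).symm.toLinearMap ∘ₗ
    TensorProduct.map aU.toLinearMap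
      (TensorProduct.map (LinearMap.id : V →ₗ[k] V) aW.symm.toLinearMap)

end Assoc

section HomLongEq

variable {k M : Type*} [Field k] [AddCommGroup M] [Module k M]

/-- `F¹² = F ⊗ μ` on `M ⊗ (M ⊗ M)`. -/
noncomputable def f12 (μ : M ≃ₗ[k] M) (F : M ⊗[k] M →ₗ[k] M ⊗[k] M) :
    M ⊗[k] (M ⊗[k] M) →ₗ[k] M ⊗[k] (M ⊗[k] M) :=
  (TensorProduct.assoc k M M M).toLinearMap ∘ₗ
    TensorProduct.map F μ.toLinearMap ∘ₗ
    (TensorProduct.assoc k M M M).symm.toLinearMap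

/-- `F²³ = μ ⊗ F` on `M ⊗ (M ⊗ M)`. -/
noncomputable def f23 (μ : M ≃ₗ[k] M) (F : M ⊗[k] M →ₗ[k] M ⊗[k] M) :
    M ⊗[k] (M ⊗[k] M) →ₗ[k] M ⊗[k] (M ⊗[k] M) :=
  TensorProduct.map μ.toLinearMap F

/-- `F¹³ = (id ⊗ τ) ∘ (F ⊗ μ) ∘ (id ⊗ τ)` on `M ⊗ (M ⊗ M)`. -/
noncomputable def f13 (μ : M ≃ₗ[k] M) (F : M ⊗[k] M →ₗ[k] M ⊗[k] M) :
    M ⊗[k] (M ⊗[k] M) →ₗ[k] M ⊗[k] (M ⊗[k] M) :=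
  TensorProduct.map (LinearMap.id : M →ₗ[k] M) (TensorProduct.comm k M M).toLinearMap ∘ₗ
    f12 μ F ∘ₗ
    TensorProduct.map (LinearMap.id : M →ₗ[k] M) (TensorProduct.comm k M M).toLinearMap

/-- The cyclic permutation `τ⁽¹²³⁾ : x ⊗ y ⊗ z ↦ z ⊗ x ⊗ y`. -/
noncomputable def cyc123 (k M : Type*) [Field k] [AddCommGroup M] [Module k M] :
    M ⊗[k] (M ⊗[k] M) →ₗ[k] M ⊗[k] (M ⊗[k] M) :=
  (TensorProduct.comm k (M ⊗[k] M) M).toLinearMap ∘ₗ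
    (TensorProduct.assoc k M M M).symm.toLinearMap

end HomLongEq

/-! ### Operators on the legs of a threefold tensor product -/

section Aux

variable {k H B U V W M N : Type*} [Field k]
variable [AddCommGroup H] [Module k H] [AddCommGroup B] [Module k B]
variable [AddCommGroup U] [Module k U] [AddCommGroup V] [Module k V] [AddCommGroup W] [Module k W]
variable [AddCommGroup M] [Module k M] [AddCommGroup N] [Module k N]

/-- `F¹²` on `U ⊗ (V ⊗ W)`. -/
noncomputable def leg12 (F : U ⊗[k] V →ₗ[k] U ⊗[k] V) :
    U ⊗[k] (V ⊗[k] W) →ₗ[k] U ⊗[k] (V ⊗[k] W) :=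
  (TensorProduct.assoc k U V W).toLinearMap ∘ₗ TensorProduct.map F LinearMap.id ∘ₗ
    (TensorProduct.assoc k U V W).symm.toLinearMap

/-- `F²³` on `U ⊗ (V ⊗ W)`. -/
noncomputable def leg23 (F : V ⊗[k] W →ₗ[k] V ⊗[k] W) :
    U ⊗[k] (V ⊗[k] W) →ₗ[k] U ⊗[k] (V ⊗[k] W) :=
  TensorProduct.map LinearMap.id F

/-- `F¹³` on `U ⊗ (V ⊗ W)`. -/
noncomputable def leg13 (F : U ⊗[k] W →ₗ[k] U ⊗[k] W) :
    U ⊗[k] (V ⊗[k] W) →ₗ[k] U ⊗[k] (V ⊗[k] W) :=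
  (TensorProduct.leftComm k U V W).symm.toLinearMap ∘ₗ TensorProduct.map LinearMap.id F ∘ₗ
    (TensorProduct.leftComm k U V W).toLinearMap

theorem leg12_tmul (F : U ⊗[k] V →ₗ[k] U ⊗[k] V) (u : U) (v : V) (w : W) :
    leg12 F (u ⊗ₜ (v ⊗ₜ w)) = TensorProduct.assoc k U V W (F (u ⊗ₜ v) ⊗ₜ w) := by
  simp [leg12]

theorem leg23_tmul (F : V ⊗[k] W →ₗ[k] V ⊗[k] W) (u : U) (t : V ⊗[k] W) :
    leg23 F (u ⊗ₜ t) = u ⊗ₜ F t := by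
  simp [leg23]

theorem leg13_tmul (F : U ⊗[k] W →ₗ[k] U ⊗[k] W) (u : U) (v : V) (w : W) :
    leg13 F (u ⊗ₜ (v ⊗ₜ w)) =
      (TensorProduct.leftComm k U V W).symm (v ⊗ₜ F (u ⊗ₜ w)) := by
  simp [leg13]

/-! ### The operator of the bilinear form -/

/-- `(x ⊗ m, y ⊗ n) ↦ ⟨x|y⟩ m ⊗ n`. -/
noncomputable def pairing (form : B →ₗ[k] B →ₗ[k] k) :
    (B ⊗[k] M) →ₗ[k] (B ⊗[k] N) →ₗ[k] M ⊗[k] N :=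
  TensorProduct.curry ((TensorProduct.lid k (M ⊗[k] N)).toLinearMap ∘ₗ
    TensorProduct.map (TensorProduct.lift form) LinearMap.id ∘ₗ
    (TensorProduct.tensorTensorTensorComm k B M B N).toLinearMap)

theorem pairing_tmul (form : B →ₗ[k] B →ₗ[k] k) (x y : B) (m : M) (n : N) :
    pairing form (x ⊗ₜ[k] m) (y ⊗ₜ[k] n) = form x y • m ⊗ₜ[k] n := by
  simp [pairing]

/-- `m ⊗ n ↦ ⟨m₋₁|n₋₁⟩ m₀ ⊗ n₀`. -/
noncomputable def formOp (form : B →ₗ[k] B →ₗ[k] k)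
    (ρM : M →ₗ[k] B ⊗[k] M) (ρN : N →ₗ[k] B ⊗[k] N) : M ⊗[k] N →ₗ[k] M ⊗[k] N :=
  TensorProduct.lift ((pairing form).compl₁₂ ρM ρN)

theorem formOp_tmul (form : B →ₗ[k] B →ₗ[k] k)
    (ρM : M →ₗ[k] B ⊗[k] M) (ρN : N →ₗ[k] B ⊗[k] N) (m : M) (n : N) :
    formOp form ρM ρN (m ⊗ₜ n) = pairing form (ρM m) (ρN n) := by
  simp [formOp]

/-- `formOp` is natural with respect to comodule endomorphisms. -/
theorem formOp_comm_map (form : B →ₗ[k] B →ₗ[k] k)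
    (ρM : M →ₗ[k] B ⊗[k] M) (ρN : N →ₗ[k] B ⊗[k] N) (f : M →ₗ[k] M) (g : N →ₗ[k] N)
    (hf : ∀ m, ρM (f m) = TensorProduct.map LinearMap.id f (ρM m))
    (hg : ∀ n, ρN (g n) = TensorProduct.map LinearMap.id g (ρN n)) (t : M ⊗[k] N) :
    formOp form ρM ρN (TensorProduct.map f g t) =
      TensorProduct.map f g (formOp form ρM ρN t) := by
  induction t with
  | zero => simp
  | add a b ha hb => simp only [map_add, ha, hb]
  | tmul m n =>
    rw [TensorProduct.map_tmul, formOp_tmul, formOp_tmul, hf, hg]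
    generalize ρM m = a
    generalize ρN n = b
    induction a with
    | zero => simp
    | add a a' ha hb => simp only [map_add, LinearMap.add_apply, ha, hb]
    | tmul x m =>
      induction b with
      | zero => simp
      | add a a' ha hb => simp only [map_add, ha, hb]
      | tmul y n => simp [pairing_tmul]

/-! ### Commutation of an operator on two legs with a diagonal operator -/

theorem leg12_comm (F : U ⊗[k] V →ₗ[k] U ⊗[k] V) (f : U →ₗ[k] U) (g : V →ₗ[k] V)
    (h : W →ₗ[k] W)
    (hF : ∀ t, F (TensorProduct.map f g t) = TensorProduct.map f g (F t)) :
    leg12 F * TensorProduct.map f (TensorProduct.map g h) =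
      TensorProduct.map f (TensorProduct.map g h) * leg12 F := by
  ext u v w
  have := hF (u ⊗ₜ v)
  rw [TensorProduct.map_tmul] at this
  simp only [TensorProduct.AlgebraTensorModule.curry_apply, LinearMap.restrictScalars_self,
    TensorProduct.curry_apply, Module.End.mul_apply, TensorProduct.map_tmul, leg12_tmul, this]
  generalize F (u ⊗ₜ v) = t
  induction t with
  | zero => simp
  | add a a' ha hb => simp only [map_add, TensorProduct.add_tmul, ha, hb]
  | tmul y n => simp

theorem leg23_comm (F : V ⊗[k] W →ₗ[k] V ⊗[k] W) (f : U →ₗ[k] U) (g : V →ₗ[k] V)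
    (h : W →ₗ[k] W)
    (hF : ∀ t, F (TensorProduct.map g h t) = TensorProduct.map g h (F t)) :
    leg23 F * TensorProduct.map f (TensorProduct.map g h) =
      TensorProduct.map f (TensorProduct.map g h) * leg23 F := by
  ext u v w
  have := hF (v ⊗ₜ w)
  rw [TensorProduct.map_tmul] at this
  simp [leg23_tmul, this]

theorem leg13_comm (F : U ⊗[k] W →ₗ[k] U ⊗[k] W) (f : U →ₗ[k] U) (g : V →ₗ[k] V)
    (h : W →ₗ[k] W)
    (hF : ∀ t, F (TensorProduct.map f h t) = TensorProduct.map f h (F t)) :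
    leg13 F * TensorProduct.map f (TensorProduct.map g h) =
      TensorProduct.map f (TensorProduct.map g h) * leg13 F := by
  ext u v w
  have := hF (u ⊗ₜ w)
  rw [TensorProduct.map_tmul] at this
  simp only [TensorProduct.AlgebraTensorModule.curry_apply, LinearMap.restrictScalars_self,
    TensorProduct.curry_apply, Module.End.mul_apply, TensorProduct.map_tmul, leg13_tmul, this]
  generalize F (u ⊗ₜ w) = t
  induction t with
  | zero => simp
  | add a a' ha hb => simp only [map_add, TensorProduct.tmul_add, ha, hb]
  | tmul y n => simp

/-! ### Removing the Hom-associators -/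

/-- The left-hand composite, for braidings of the form `τ ∘ F`. The structure maps coming from the
associators cancel, except for a conjugation by the structure map of `W`; nothing is required of
the operators `F`. -/
theorem lhs_eq (aU : U ≃ₗ[k] U) (aV : V ≃ₗ[k] V) (aW : W ≃ₗ[k] W)
    (FUV : U ⊗[k] V →ₗ[k] U ⊗[k] V) (FUW : U ⊗[k] W →ₗ[k] U ⊗[k] W)
    (FVW : V ⊗[k] W →ₗ[k] V ⊗[k] W) (u : U) (v : V) (w : W) :
    TensorProduct.map LinearMap.id ((TensorProduct.comm k U V).toLinearMap ∘ₗ FUV)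
      (assocL aW aV
        (TensorProduct.map ((TensorProduct.comm k U W).toLinearMap ∘ₗ FUW) LinearMap.id
          (assocLinv aU aV
            (TensorProduct.map LinearMap.id ((TensorProduct.comm k V W).toLinearMap ∘ₗ FVW)
              (assocL aU aW ((u ⊗ₜ v) ⊗ₜ w)))))) =
      TensorProduct.map aW.symm.toLinearMap (TensorProduct.comm k U V).toLinearMap
        (TensorProduct.comm k (U ⊗[k] V) W ((TensorProduct.assoc k U V W).symm
          ((leg12 FUV * leg13 FUW * leg23 FVW : Module.End k (U ⊗[k] (V ⊗[k] W))) (u ⊗ₜ (v ⊗ₜ aW w))))) := by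
  simp only [Module.End.mul_apply, leg23_tmul]
  simp only [assocL, LinearMap.comp_apply, LinearEquiv.coe_coe, TensorProduct.assoc_tmul,
    TensorProduct.map_tmul, LinearMap.id_apply]
  generalize FVW (v ⊗ₜ aW w) = t
  induction t with
  | zero => simp
  | add a b ha hb => simp only [map_add, TensorProduct.tmul_add, ha, hb]
  | tmul v w =>
    simp only [assocLinv, LinearMap.comp_apply, LinearEquiv.coe_coe, TensorProduct.assoc_symm_tmul,
      TensorProduct.map_tmul, LinearMap.id_apply, TensorProduct.comm_tmul, leg13_tmul,
      LinearEquiv.apply_symm_apply]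
    generalize FUW (u ⊗ₜ w) = t
    induction t with
    | zero => simp
    | add a b ha hb => simp only [map_add, TensorProduct.tmul_add, TensorProduct.add_tmul, ha, hb]
    | tmul u w => simp [leg12_tmul]

/-- The right-hand composite, with the same conjugation as in `lhs_eq`. -/
theorem rhs_eq (aU : U ≃ₗ[k] U) (aV : V ≃ₗ[k] V) (aW : W ≃ₗ[k] W)
    (FUV : U ⊗[k] V →ₗ[k] U ⊗[k] V) (FUW : U ⊗[k] W →ₗ[k] U ⊗[k] W)
    (FVW : V ⊗[k] W →ₗ[k] V ⊗[k] W) (u : U) (v : V) (w : W) :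
    assocL aW aU
      (TensorProduct.map ((TensorProduct.comm k V W).toLinearMap ∘ₗ FVW) LinearMap.id
        (assocLinv aV aU
          (TensorProduct.map LinearMap.id ((TensorProduct.comm k U W).toLinearMap ∘ₗ FUW)
            (assocL aV aW
              (TensorProduct.map ((TensorProduct.comm k U V).toLinearMap ∘ₗ FUV) LinearMap.id
                ((u ⊗ₜ v) ⊗ₜ w)))))) =
      TensorProduct.map aW.symm.toLinearMap (TensorProduct.comm k U V).toLinearMap
        (TensorProduct.comm k (U ⊗[k] V) W ((TensorProduct.assoc k U V W).symm
          ((leg23 FVW * leg13 FUW * leg12 FUV : Module.End k (U ⊗[k] (V ⊗[k] W))) (u ⊗ₜ (v ⊗ₜ aW w))))) := by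
  simp only [Module.End.mul_apply, leg12_tmul]
  simp only [LinearMap.comp_apply, LinearEquiv.coe_coe,
    TensorProduct.map_tmul, LinearMap.id_apply]
  generalize FUV (u ⊗ₜ v) = t
  induction t with
  | zero => simp
  | add a b ha hb => simp only [map_add, TensorProduct.add_tmul, ha, hb]
  | tmul u v =>
    simp only [assocL, LinearMap.comp_apply, LinearEquiv.coe_coe, TensorProduct.assoc_tmul,
      TensorProduct.map_tmul, LinearMap.id_apply, TensorProduct.comm_tmul, leg13_tmul]
    generalize FUW (u ⊗ₜ aW w) = t
    induction t with
    | zero => simp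
    | add a b ha hb => simp only [map_add, TensorProduct.tmul_add, ha, hb]
    | tmul u w =>
      simp only [assocLinv, LinearMap.comp_apply, LinearEquiv.coe_coe,
        TensorProduct.assoc_symm_tmul, TensorProduct.leftComm_symm_tmul,
        TensorProduct.map_tmul, LinearMap.id_apply, TensorProduct.comm_tmul, leg23_tmul,
        LinearEquiv.apply_symm_apply]
      generalize FVW (v ⊗ₜ w) = t
      induction t with
      | zero => simp
      | add a b ha hb => simp only [map_add, TensorProduct.tmul_add, TensorProduct.add_tmul, ha, hb]
      | tmul v w => simp

/-! ### The Yang-Baxter equation for the bilinear form -/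

/-- `x ⊗ (y ⊗ z) ↦ ⟨y₁|z₁⟩⟨x₁|z₂⟩⟨x₂|y₂⟩` on pure tensors `x = x₁ ⊗ x₂`, `y`, `z` of `B ⊗ B`. -/
noncomputable def scalarL (form : B →ₗ[k] B →ₗ[k] k) :
    (B ⊗[k] B) ⊗[k] ((B ⊗[k] B) ⊗[k] (B ⊗[k] B)) →ₗ[k] k :=
  LinearMap.mul' k k ∘ₗ
    TensorProduct.map (TensorProduct.lift form)
      (LinearMap.mul' k k ∘ₗ
        TensorProduct.map (TensorProduct.lift form) (TensorProduct.lift form) ∘ₗ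
        (TensorProduct.tensorTensorTensorComm k B B B B).toLinearMap ∘ₗ
        TensorProduct.map LinearMap.id (TensorProduct.comm k B B).toLinearMap) ∘ₗ
    (TensorProduct.leftComm k (B ⊗[k] B) (B ⊗[k] B) (B ⊗[k] B)).toLinearMap ∘ₗ
    TensorProduct.map LinearMap.id (TensorProduct.tensorTensorTensorComm k B B B B).toLinearMap

/-- `x ⊗ (y ⊗ z) ↦ ⟨x₁|y₁⟩⟨x₂|z₁⟩⟨y₂|z₂⟩` on pure tensors `x = x₁ ⊗ x₂`, `y`, `z` of `B ⊗ B`. -/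
noncomputable def scalarR (form : B →ₗ[k] B →ₗ[k] k) :
    (B ⊗[k] B) ⊗[k] ((B ⊗[k] B) ⊗[k] (B ⊗[k] B)) →ₗ[k] k :=
  LinearMap.mul' k k ∘ₗ
    TensorProduct.map (TensorProduct.lift form)
      (LinearMap.mul' k k ∘ₗ
        TensorProduct.map (TensorProduct.lift form) (TensorProduct.lift form) ∘ₗ
        (TensorProduct.tensorTensorTensorComm k B B B B).toLinearMap) ∘ₗ
    (TensorProduct.assoc k (B ⊗[k] B) (B ⊗[k] B) (B ⊗[k] B)).toLinearMap ∘ₗ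
    TensorProduct.map (TensorProduct.tensorTensorTensorComm k B B B B).toLinearMap
      LinearMap.id ∘ₗ
    (TensorProduct.assoc k (B ⊗[k] B) (B ⊗[k] B) (B ⊗[k] B)).symm.toLinearMap

theorem scalarL_tmul (form : B →ₗ[k] B →ₗ[k] k) (x₁ x₂ y₁ y₂ z₁ z₂ : B) :
    scalarL form ((x₁ ⊗ₜ x₂) ⊗ₜ ((y₁ ⊗ₜ y₂) ⊗ₜ (z₁ ⊗ₜ z₂))) =
      form y₁ z₁ * (form x₁ z₂ * form x₂ y₂) := by
  simp [scalarL]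

theorem scalarR_tmul (form : B →ₗ[k] B →ₗ[k] k) (x₁ x₂ y₁ y₂ z₁ z₂ : B) :
    scalarR form ((x₁ ⊗ₜ x₂) ⊗ₜ ((y₁ ⊗ₜ y₂) ⊗ₜ (z₁ ⊗ₜ z₂))) =
      form x₁ y₁ * (form x₂ z₁ * form y₂ z₂) := by
  simp [scalarR]

/-- `(d ⊗ u) ⊗ ((e ⊗ v) ⊗ (f ⊗ w)) ↦ S(d ⊗ (e ⊗ f)) u ⊗ (v ⊗ w)`. -/
noncomputable def contract {D : Type*} [AddCommGroup D] [Module k D]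
    (S : D ⊗[k] (D ⊗[k] D) →ₗ[k] k) :
    (D ⊗[k] U) ⊗[k] ((D ⊗[k] V) ⊗[k] (D ⊗[k] W)) →ₗ[k] U ⊗[k] (V ⊗[k] W) :=
  (TensorProduct.lid k (U ⊗[k] (V ⊗[k] W))).toLinearMap ∘ₗ
    TensorProduct.map S LinearMap.id ∘ₗ
    (TensorProduct.tensorTensorTensorComm k D U (D ⊗[k] D) (V ⊗[k] W)).toLinearMap ∘ₗ
    TensorProduct.map LinearMap.id (TensorProduct.tensorTensorTensorComm k D V D W).toLinearMap

theorem contract_tmul {D : Type*} [AddCommGroup D] [Module k D]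
    (S : D ⊗[k] (D ⊗[k] D) →ₗ[k] k) (d e f : D) (u : U) (v : V) (w : W) :
    contract S ((d ⊗ₜ[k] u) ⊗ₜ[k] ((e ⊗ₜ[k] v) ⊗ₜ[k] (f ⊗ₜ[k] w))) =
      S (d ⊗ₜ (e ⊗ₜ f)) • u ⊗ₜ[k] (v ⊗ₜ[k] w) := by
  simp [contract]

/-- `x ⊗ m ↦ (x ⊗ m₋₁) ⊗ m₀`; evaluated at `ρ(m)` it gives the iterated coaction
`(m₋₁ ⊗ m₀₋₁) ⊗ m₀₀`. -/
noncomputable def coactAgain (ρ : M →ₗ[k] B ⊗[k] M) : B ⊗[k] M →ₗ[k] (B ⊗[k] B) ⊗[k] M :=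
  (TensorProduct.assoc k B B M).symm.toLinearMap ∘ₗ TensorProduct.map LinearMap.id ρ

theorem coactAgain_tmul (ρ : M →ₗ[k] B ⊗[k] M) (x : B) (m : M) :
    coactAgain ρ (x ⊗ₜ m) = (TensorProduct.assoc k B B M).symm (x ⊗ₜ ρ m) := by
  simp [coactAgain]

theorem form_lhs (form : B →ₗ[k] B →ₗ[k] k) (ρU : U →ₗ[k] B ⊗[k] U) (ρV : V →ₗ[k] B ⊗[k] V)
    (ρW : W →ₗ[k] B ⊗[k] W) (u : U) (v : V) (w : W) :
    leg12 (formOp form ρU ρV) (leg13 (formOp form ρU ρW) (leg23 (formOp form ρV ρW)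
      (u ⊗ₜ (v ⊗ₜ w)))) =
    contract (scalarL form) (coactAgain ρU (ρU u) ⊗ₜ
      (coactAgain ρV (ρV v) ⊗ₜ coactAgain ρW (ρW w))) := by
  rw [leg23_tmul, formOp_tmul]
  generalize ρV v = tv
  generalize ρW w = tw
  induction tv with
  | zero => simp
  | add a b ha hb =>
    simp only [map_add, LinearMap.add_apply, TensorProduct.tmul_add, TensorProduct.add_tmul, ha, hb]
  | tmul y v =>
  induction tw with
  | zero => simp
  | add a b ha hb =>
    simp only [map_add, TensorProduct.tmul_add, ha, hb]
  | tmul z w =>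
  rw [pairing_tmul, TensorProduct.tmul_smul, map_smul, map_smul, leg13_tmul, formOp_tmul,
    coactAgain_tmul, coactAgain_tmul]
  generalize ρU u = tu
  generalize ρW w = tw
  induction tu with
  | zero => simp
  | add a b ha hb =>
    simp only [map_add, LinearMap.add_apply, TensorProduct.tmul_add, TensorProduct.add_tmul,
      smul_add, ha, hb]
  | tmul x u =>
  induction tw with
  | zero => simp
  | add a b ha hb =>
    simp only [map_add, TensorProduct.tmul_add, smul_add, ha, hb]
  | tmul z' w =>
  rw [pairing_tmul, TensorProduct.tmul_smul, map_smul, map_smul, TensorProduct.leftComm_symm_tmul,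
    leg12_tmul, formOp_tmul, coactAgain_tmul]
  generalize ρU u = tu
  generalize ρV v = tv
  induction tu with
  | zero => simp
  | add a b ha hb =>
    simp only [map_add, LinearMap.add_apply, TensorProduct.tmul_add, TensorProduct.add_tmul,
      smul_add, ha, hb]
  | tmul x' u =>
  induction tv with
  | zero => simp
  | add a b ha hb =>
    simp only [map_add, TensorProduct.tmul_add, TensorProduct.add_tmul, smul_add, ha, hb]
  | tmul y' v =>
  simp only [pairing_tmul, TensorProduct.assoc_symm_tmul, contract_tmul, scalarL_tmul,
    TensorProduct.smul_tmul', TensorProduct.assoc_tmul, smul_smul]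

theorem form_rhs (form : B →ₗ[k] B →ₗ[k] k) (ρU : U →ₗ[k] B ⊗[k] U) (ρV : V →ₗ[k] B ⊗[k] V)
    (ρW : W →ₗ[k] B ⊗[k] W) (u : U) (v : V) (w : W) :
    leg23 (formOp form ρV ρW) (leg13 (formOp form ρU ρW) (leg12 (formOp form ρU ρV)
      (u ⊗ₜ (v ⊗ₜ w)))) =
    contract (scalarR form) (coactAgain ρU (ρU u) ⊗ₜ
      (coactAgain ρV (ρV v) ⊗ₜ coactAgain ρW (ρW w))) := by
  rw [leg12_tmul, formOp_tmul]
  generalize ρU u = tu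
  generalize ρV v = tv
  induction tu with
  | zero => simp
  | add a b ha hb =>
    simp only [map_add, LinearMap.add_apply, TensorProduct.add_tmul, ha, hb]
  | tmul x u =>
  induction tv with
  | zero => simp
  | add a b ha hb =>
    simp only [map_add, TensorProduct.tmul_add, TensorProduct.add_tmul, ha, hb]
  | tmul y v =>
  rw [pairing_tmul, ← TensorProduct.smul_tmul', map_smul, map_smul, map_smul,
    TensorProduct.assoc_tmul, leg13_tmul, formOp_tmul, coactAgain_tmul, coactAgain_tmul]
  generalize ρU u = tu
  generalize ρW w = tw
  induction tu with
  | zero => simp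
  | add a b ha hb =>
    simp only [map_add, LinearMap.add_apply, TensorProduct.tmul_add, TensorProduct.add_tmul,
      smul_add, ha, hb]
  | tmul x' u =>
  induction tw with
  | zero => simp
  | add a b ha hb =>
    simp only [map_add, TensorProduct.tmul_add, smul_add, ha, hb]
  | tmul z w =>
  rw [pairing_tmul, TensorProduct.tmul_smul, map_smul, map_smul, TensorProduct.leftComm_symm_tmul,
    leg23_tmul, formOp_tmul, coactAgain_tmul]
  generalize ρV v = tv
  generalize ρW w = tw
  induction tv with
  | zero => simp
  | add a b ha hb =>
    simp only [map_add, LinearMap.add_apply, TensorProduct.tmul_add, TensorProduct.add_tmul,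
      smul_add, ha, hb]
  | tmul y' v =>
  induction tw with
  | zero => simp
  | add a b ha hb =>
    simp only [map_add, TensorProduct.tmul_add, smul_add, ha, hb]
  | tmul z' w =>
  simp only [pairing_tmul, TensorProduct.assoc_symm_tmul, contract_tmul, scalarR_tmul,
    TensorProduct.tmul_smul, smul_smul]

/-- The form operators of three coassociative coactions satisfy the Yang-Baxter equation as soon as
`⟨y₁|z₁⟩⟨x₁|z₂⟩⟨x₂|y₂⟩ = ⟨x₁|y₁⟩⟨x₂|z₁⟩⟨y₂|z₂⟩` holds for the comultiplication `Δ`. -/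
theorem form_yang_baxter (form : B →ₗ[k] B →ₗ[k] k) (Δ : B →ₗ[k] B ⊗[k] B)
    (hS : ∀ x y z, scalarL form (Δ x ⊗ₜ (Δ y ⊗ₜ Δ z)) = scalarR form (Δ x ⊗ₜ (Δ y ⊗ₜ Δ z)))
    (ρU : U →ₗ[k] B ⊗[k] U) (ρV : V →ₗ[k] B ⊗[k] V) (ρW : W →ₗ[k] B ⊗[k] W)
    (hU : ∀ u, coactAgain ρU (ρU u) = TensorProduct.map Δ LinearMap.id (ρU u))
    (hV : ∀ v, coactAgain ρV (ρV v) = TensorProduct.map Δ LinearMap.id (ρV v))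
    (hW : ∀ w, coactAgain ρW (ρW w) = TensorProduct.map Δ LinearMap.id (ρW w)) :
    (leg12 (formOp form ρU ρV) * leg13 (formOp form ρU ρW) * leg23 (formOp form ρV ρW) :
        Module.End k (U ⊗[k] (V ⊗[k] W))) =
      leg23 (formOp form ρV ρW) * leg13 (formOp form ρU ρW) * leg12 (formOp form ρU ρV) := by
  ext u v w
  simp only [TensorProduct.AlgebraTensorModule.curry_apply, LinearMap.restrictScalars_self,
    TensorProduct.curry_apply, Module.End.mul_apply]
  rw [form_lhs, form_rhs, hU, hV, hW]
  generalize ρU u = tu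
  generalize ρV v = tv
  generalize ρW w = tw
  induction tu with
  | zero => simp
  | add a b ha hb => simp only [map_add, TensorProduct.add_tmul, ha, hb]
  | tmul x u =>
  induction tv with
  | zero => simp
  | add a b ha hb => simp only [map_add, TensorProduct.tmul_add, TensorProduct.add_tmul, ha, hb]
  | tmul y v =>
  induction tw with
  | zero => simp
  | add a b ha hb => simp only [map_add, TensorProduct.tmul_add, ha, hb]
  | tmul z w => simp only [TensorProduct.map_tmul, contract_tmul, hS]

/-- `⟨y₁|z₁⟩⟨x₁|z₂⟩⟨x₂|y₂⟩ = ⟨x₁y₁|β²(z)⟩⟨x₂|y₂⟩`, with `x₁ ⊗ x₂` and `y₁ ⊗ y₂` replaced by arbitrary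
tensors `d` and `e`. -/
theorem scalarL_comul (BC : CQTHomHopf k B) (d e : B ⊗[k] B) (z : B) :
    scalarL BC.form (d ⊗ₜ (e ⊗ₜ BC.comul z)) =
      BC.form (TensorProduct.rid k B
          (TensorProduct.map (TensorProduct.lift BC.mul) (TensorProduct.lift BC.form)
            (TensorProduct.tensorTensorTensorComm k B B B B (d ⊗ₜ[k] e))))
        (BC.auto (BC.auto z)) := by
  induction d with
  | zero => simp
  | add a b ha hb => simp only [map_add, LinearMap.add_apply, TensorProduct.add_tmul, ha, hb]
  | tmul x₁ x₂ =>
  induction e with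
  | zero => simp
  | add a b ha hb =>
    simp only [map_add, LinearMap.add_apply, TensorProduct.tmul_add, TensorProduct.add_tmul, ha, hb]
  | tmul y₁ y₂ =>
  have h := BC.cha1 (BC.auto.symm x₁) (BC.auto.symm y₁) z
  rw [← BC.cha5, BC.auto_mul] at h
  simp only [LinearEquiv.apply_symm_apply] at h
  simp only [TensorProduct.tensorTensorTensorComm_tmul, TensorProduct.map_tmul,
    TensorProduct.lift.tmul, TensorProduct.rid_tmul, map_smul, LinearMap.smul_apply, h, smul_eq_mul]
  generalize BC.comul z = f
  induction f with
  | zero => simp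
  | add a b ha hb => simp only [map_add, TensorProduct.tmul_add, mul_add, ha, hb]
  | tmul z₁ z₂ =>
    simp only [scalarL_tmul, TensorProduct.map_tmul, LinearMap.mul'_apply]
    ring

/-- `⟨x₁|y₁⟩⟨x₂|z₁⟩⟨y₂|z₂⟩ = ⟨x₁|y₁⟩⟨y₂x₂|β²(z)⟩`, with `x₁ ⊗ x₂` and `y₁ ⊗ y₂` replaced by arbitrary
tensors `d` and `e`. -/
theorem scalarR_comul (BC : CQTHomHopf k B) (d e : B ⊗[k] B) (z : B) :
    scalarR BC.form (d ⊗ₜ (e ⊗ₜ BC.comul z)) =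
      BC.form (TensorProduct.lid k B (TensorProduct.map (TensorProduct.lift BC.form)
        ((TensorProduct.lift BC.mul) ∘ₗ (TensorProduct.comm k B B).toLinearMap)
        (TensorProduct.tensorTensorTensorComm k B B B B (d ⊗ₜ[k] e))))
        (BC.auto (BC.auto z)) := by
  induction d with
  | zero => simp
  | add a b ha hb => simp only [map_add, LinearMap.add_apply, TensorProduct.add_tmul, ha, hb]
  | tmul x₁ x₂ =>
  induction e with
  | zero => simp
  | add a b ha hb =>
    simp only [map_add, LinearMap.add_apply, TensorProduct.tmul_add, TensorProduct.add_tmul, ha, hb]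
  | tmul y₁ y₂ =>
  have h := BC.cha1 (BC.auto.symm y₂) (BC.auto.symm x₂) z
  rw [← BC.cha5, BC.auto_mul] at h
  simp only [LinearEquiv.apply_symm_apply] at h
  simp only [TensorProduct.tensorTensorTensorComm_tmul, TensorProduct.map_tmul,
    TensorProduct.lift.tmul, TensorProduct.lid_tmul, map_smul, LinearMap.smul_apply,
    LinearMap.comp_apply, LinearEquiv.coe_coe, TensorProduct.comm_tmul, h, smul_eq_mul]
  generalize BC.comul z = f
  induction f with
  | zero => simp
  | add a b ha hb => simp only [map_add, TensorProduct.tmul_add, mul_add, ha, hb]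
  | tmul z₁ z₂ =>
    simp only [scalarR_tmul, TensorProduct.map_tmul, LinearMap.mul'_apply]

theorem scalarL_eq_scalarR (BC : CQTHomHopf k B) (x y z : B) :
    scalarL BC.form (BC.comul x ⊗ₜ (BC.comul y ⊗ₜ BC.comul z)) =
      scalarR BC.form (BC.comul x ⊗ₜ (BC.comul y ⊗ₜ BC.comul z)) := by
  rw [scalarL_comul, scalarR_comul, BC.cha3]

/-! ### Combining the form operators with the operators of the R-matrix -/

theorem leg12_map (f : U →ₗ[k] U) (g : V →ₗ[k] V) :
    (leg12 (TensorProduct.map f g) : Module.End k (U ⊗[k] (V ⊗[k] W))) =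
      TensorProduct.map f (TensorProduct.map g LinearMap.id) := by
  ext u v w
  simp [leg12_tmul]

theorem leg13_map (f : U →ₗ[k] U) (h : W →ₗ[k] W) :
    (leg13 (TensorProduct.map f h) : Module.End k (U ⊗[k] (V ⊗[k] W))) =
      TensorProduct.map f (TensorProduct.map LinearMap.id h) := by
  ext u v w
  simp [leg13_tmul]

theorem leg12_sum {ι : Type*} (s : Finset ι) (F : ι → (U ⊗[k] V →ₗ[k] U ⊗[k] V)) :
    (leg12 (∑ i ∈ s, F i) : Module.End k (U ⊗[k] (V ⊗[k] W))) = ∑ i ∈ s, leg12 (F i) := by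
  ext u v w
  simp [leg12_tmul, TensorProduct.sum_tmul]

theorem leg13_sum {ι : Type*} (s : Finset ι) (F : ι → (U ⊗[k] W →ₗ[k] U ⊗[k] W)) :
    (leg13 (∑ i ∈ s, F i) : Module.End k (U ⊗[k] (V ⊗[k] W))) = ∑ i ∈ s, leg13 (F i) := by
  ext u v w
  simp [leg13_tmul, TensorProduct.tmul_sum]

theorem leg23_sum {ι : Type*} (s : Finset ι) (F : ι → (V ⊗[k] W →ₗ[k] V ⊗[k] W)) :
    (leg23 (∑ i ∈ s, F i) : Module.End k (U ⊗[k] (V ⊗[k] W))) = ∑ i ∈ s, leg23 (F i) := by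
  ext u v w
  simp [leg23_tmul, TensorProduct.tmul_sum]

theorem leg12_comp (F G : U ⊗[k] V →ₗ[k] U ⊗[k] V) :
    (leg12 (F ∘ₗ G) : Module.End k (U ⊗[k] (V ⊗[k] W))) = leg12 F * leg12 G := by
  apply LinearMap.ext
  intro x
  rw [Module.End.mul_apply]
  simp only [leg12, LinearMap.comp_apply, LinearEquiv.coe_coe, LinearEquiv.symm_apply_apply]
  rw [← LinearMap.comp_apply, ← TensorProduct.map_comp, LinearMap.comp_id]

theorem leg13_comp (F G : U ⊗[k] W →ₗ[k] U ⊗[k] W) :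
    (leg13 (F ∘ₗ G) : Module.End k (U ⊗[k] (V ⊗[k] W))) = leg13 F * leg13 G := by
  apply LinearMap.ext
  intro x
  rw [Module.End.mul_apply]
  simp only [leg13, LinearMap.comp_apply, LinearEquiv.coe_coe, LinearEquiv.apply_symm_apply]
  rw [← LinearMap.comp_apply (TensorProduct.map _ _), ← TensorProduct.map_comp, LinearMap.comp_id]

theorem leg23_comp (F G : V ⊗[k] W →ₗ[k] V ⊗[k] W) :
    (leg23 (F ∘ₗ G) : Module.End k (U ⊗[k] (V ⊗[k] W))) = leg23 F * leg23 G := by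
  ext u v w
  simp [leg23_tmul]

/-- `f` is a comodule endomorphism with respect to `ρ`. -/
def IsComodEnd (ρ : M →ₗ[k] B ⊗[k] M) (f : M →ₗ[k] M) : Prop :=
  ∀ m, ρ (f m) = TensorProduct.map LinearMap.id f (ρ m)

theorem isComodEnd_id (ρ : M →ₗ[k] B ⊗[k] M) : IsComodEnd ρ LinearMap.id := by
  intro m
  simp

/-- The operator `m ⊗ n ↦ θ_M(R¹)(m) ⊗ θ_N(R²)(n)` on `M ⊗ N`, linear in `R : H ⊗ H`. -/
noncomputable def rOp (θM : H →ₗ[k] Module.End k M) (θN : H →ₗ[k] Module.End k N) :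
    H ⊗[k] H →ₗ[k] M ⊗[k] N →ₗ[k] M ⊗[k] N :=
  TensorProduct.lift ((TensorProduct.mapBilinear (.id k) M N M N).compl₁₂ θM θN)

theorem rOp_tmul (θM : H →ₗ[k] Module.End k M) (θN : H →ₗ[k] Module.End k N) (a b : H) :
    rOp θM θN (a ⊗ₜ b) = TensorProduct.map (θM a) (θN b) := by
  simp [rOp]

theorem mul_rearrange {A : Type*} [Monoid A] {r₁ f₁ r₂ f₂ r₃ f₃ : A}
    (h₁₂ : Commute f₁ r₂) (h₁₃ : Commute f₁ r₃) (h₂₃ : Commute f₂ r₃) :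
    (r₁ * f₁) * (r₂ * f₂) * (r₃ * f₃) = (r₁ * r₂ * r₃) * (f₁ * f₂ * f₃) := by
  calc (r₁ * f₁) * (r₂ * f₂) * (r₃ * f₃) = r₁ * (f₁ * r₂) * (f₂ * r₃) * f₃ := by
        simp only [mul_assoc]
    _ = r₁ * r₂ * (f₁ * r₃) * f₂ * f₃ := by rw [h₁₂.eq, h₂₃.eq]; simp only [mul_assoc]
    _ = _ := by rw [h₁₃.eq]; simp only [mul_assoc]

theorem leg12_rOp (θU : H →ₗ[k] Module.End k U) (θV : H →ₗ[k] Module.End k V)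
    (s : Finset (H × H)) :
    (leg12 (rOp θU θV (∑ p ∈ s, p.1 ⊗ₜ[k] p.2)) : Module.End k (U ⊗[k] (V ⊗[k] W))) =
      ∑ p ∈ s, TensorProduct.map (θU p.1) (TensorProduct.map (θV p.2) LinearMap.id) := by
  simp only [map_sum, rOp_tmul, leg12_sum, leg12_map]

theorem leg13_rOp (θU : H →ₗ[k] Module.End k U) (θW : H →ₗ[k] Module.End k W)
    (s : Finset (H × H)) :
    (leg13 (rOp θU θW (∑ p ∈ s, p.1 ⊗ₜ[k] p.2)) : Module.End k (U ⊗[k] (V ⊗[k] W))) =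
      ∑ p ∈ s, TensorProduct.map (θU p.1) (TensorProduct.map LinearMap.id (θW p.2)) := by
  simp only [map_sum, rOp_tmul, leg13_sum, leg13_map]

theorem leg23_rOp (θV : H →ₗ[k] Module.End k V) (θW : H →ₗ[k] Module.End k W)
    (s : Finset (H × H)) :
    (leg23 (rOp θV θW (∑ p ∈ s, p.1 ⊗ₜ[k] p.2)) : Module.End k (U ⊗[k] (V ⊗[k] W))) =
      ∑ p ∈ s, TensorProduct.map LinearMap.id (TensorProduct.map (θV p.1) (θW p.2)) := by
  simp only [map_sum, rOp_tmul, leg23_sum]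
  rfl

/-- When `H` acts by comodule endomorphisms, the operators of `R` on two legs commute with those of
the form on two legs, so the Yang-Baxter equations for `R` and for the form multiply to the one for
the composite operators. -/
theorem combined_yang_baxter (form : B →ₗ[k] B →ₗ[k] k)
    (ρU : U →ₗ[k] B ⊗[k] U) (ρV : V →ₗ[k] B ⊗[k] V) (ρW : W →ₗ[k] B ⊗[k] W)
    (θU : H →ₗ[k] Module.End k U) (θV : H →ₗ[k] Module.End k V) (θW : H →ₗ[k] Module.End k W)
    (hU : ∀ h, IsComodEnd ρU (θU h)) (hV : ∀ h, IsComodEnd ρV (θV h))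
    (hW : ∀ h, IsComodEnd ρW (θW h)) (R : H ⊗[k] H)
    (hform : (leg12 (formOp form ρU ρV) * leg13 (formOp form ρU ρW) * leg23 (formOp form ρV ρW) :
        Module.End k (U ⊗[k] (V ⊗[k] W))) =
      leg23 (formOp form ρV ρW) * leg13 (formOp form ρU ρW) * leg12 (formOp form ρU ρV))
    (hR : (leg12 (rOp θU θV R) * leg13 (rOp θU θW R) * leg23 (rOp θV θW R) :
        Module.End k (U ⊗[k] (V ⊗[k] W))) =
      leg23 (rOp θV θW R) * leg13 (rOp θU θW R) * leg12 (rOp θU θV R)) :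
    (leg12 (rOp θU θV R ∘ₗ formOp form ρU ρV) * leg13 (rOp θU θW R ∘ₗ formOp form ρU ρW) *
        leg23 (rOp θV θW R ∘ₗ formOp form ρV ρW) : Module.End k (U ⊗[k] (V ⊗[k] W))) =
      leg23 (rOp θV θW R ∘ₗ formOp form ρV ρW) * leg13 (rOp θU θW R ∘ₗ formOp form ρU ρW) *
        leg12 (rOp θU θV R ∘ₗ formOp form ρU ρV) := by
  have iU := isComodEnd_id ρU
  have iV := isComodEnd_id ρV
  have iW := isComodEnd_id ρW
  have c12 : ∀ f g h, IsComodEnd ρU f → IsComodEnd ρV g → IsComodEnd ρW h →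
      Commute (leg12 (formOp form ρU ρV) : Module.End k (U ⊗[k] (V ⊗[k] W)))
        (TensorProduct.map f (TensorProduct.map g h)) := fun f g h hf hg hh =>
    leg12_comm _ _ _ _ (formOp_comm_map form ρU ρV f g hf hg)
  have c13 : ∀ f g h, IsComodEnd ρU f → IsComodEnd ρV g → IsComodEnd ρW h →
      Commute (leg13 (formOp form ρU ρW) : Module.End k (U ⊗[k] (V ⊗[k] W)))
        (TensorProduct.map f (TensorProduct.map g h)) := fun f g h hf hg hh =>
    leg13_comm _ _ _ _ (formOp_comm_map form ρU ρW f h hf hh)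
  have c23 : ∀ f g h, IsComodEnd ρU f → IsComodEnd ρV g → IsComodEnd ρW h →
      Commute (leg23 (formOp form ρV ρW) : Module.End k (U ⊗[k] (V ⊗[k] W)))
        (TensorProduct.map f (TensorProduct.map g h)) := fun f g h hf hg hh =>
    leg23_comm _ _ _ _ (formOp_comm_map form ρV ρW g h hg hh)
  simp only [leg12_comp, leg13_comp, leg23_comp]
  obtain ⟨s, hs⟩ := TensorProduct.exists_finset R
  rw [mul_rearrange, mul_rearrange, hR, hform]
  · rw [hs, leg13_rOp]
    exact Commute.sum_right _ _ _ fun p _ => c23 _ _ _ (hU _) iV (hW _)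
  · rw [hs, leg12_rOp]
    exact Commute.sum_right _ _ _ fun p _ => c23 _ _ _ (hU _) (hV _) iW
  · rw [hs, leg12_rOp]
    exact Commute.sum_right _ _ _ fun p _ => c13 _ _ _ (hU _) (hV _) iW
  · rw [hs, leg13_rOp]
    exact Commute.sum_right _ _ _ fun p _ => c12 _ _ _ (hU _) iV (hW _)
  · rw [hs, leg23_rOp]
    exact Commute.sum_right _ _ _ fun p _ => c12 _ _ _ iU (hV _) (hW _)
  · rw [hs, leg23_rOp]
    exact Commute.sum_right _ _ _ fun p _ => c13 _ _ _ iU (hV _) (hW _)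

/-! ### The Yang-Baxter equation for the R-matrix -/

/-- The identity `R₁₂R₁₃R₂₃ = R₂₃R₁₃R₁₂` in `H ⊗ H ⊗ H`, up to powers of `α`, where `R₁₂`, `R₁₃`
and `R₂₃` are indexed by `i`, `j` and `l`. It follows from `R₁₃R₂₃ = (Δ ⊗ α)(R)` and
`RΔ(h) = Δᵒᵖ(h)R`. -/
theorem R_yang_baxter_aux (HQ : QTHomHopf k H) (s : Finset (H × H))
    (hs : HQ.R = ∑ p ∈ s, p.1 ⊗ₜ[k] p.2) :
    ∑ l ∈ s, ∑ j ∈ s, ∑ i ∈ s, (HQ.auto (HQ.mul i.1 j.1) ⊗ₜ[k] HQ.auto (HQ.mul i.2 l.1)) ⊗ₜ[k]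
          HQ.mul j.2 l.2 =
      ∑ l ∈ s, ∑ j ∈ s, ∑ i ∈ s,
        (HQ.auto (HQ.mul j.1 i.1) ⊗ₜ[k] HQ.auto (HQ.mul l.1 i.2)) ⊗ₜ[k] HQ.mul l.2 j.2 := by
  let mm : (H ⊗[k] H) →ₗ[k] (H ⊗[k] H) →ₗ[k] H ⊗[k] H := TensorProduct.curry
    (TensorProduct.map (TensorProduct.lift HQ.mul) (TensorProduct.lift HQ.mul) ∘ₗ
        (TensorProduct.tensorTensorTensorComm k H H H H).toLinearMap)
  have mm_tmul : ∀ a b c d, mm (a ⊗ₜ b) (c ⊗ₜ d) = HQ.mul a c ⊗ₜ HQ.mul b d := by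
    intros; simp [mm]
  -- `T` is the copy of `R` that is expanded as `α(R¹) ⊗ α(R²)`.
  obtain ⟨T, hT⟩ : ∃ T, T = HQ.R := ⟨_, rfl⟩
  have h4 : mm.flip T ∘ₗ (TensorProduct.comm k H H).toLinearMap ∘ₗ HQ.comul =
      mm T ∘ₗ HQ.comul := by
    rw [hT]
    exact LinearMap.ext fun h => HQ.qha4 h
  have key : TensorProduct.map (mm T) (LinearMap.id : H →ₗ[k] H)
        (TensorProduct.map HQ.comul HQ.auto.toLinearMap HQ.R) =
      TensorProduct.map (mm.flip T ∘ₗ (TensorProduct.comm k H H).toLinearMap)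
        (LinearMap.id : H →ₗ[k] H) (TensorProduct.map HQ.comul HQ.auto.toLinearMap HQ.R) := by
    rw [← LinearMap.comp_apply, ← LinearMap.comp_apply, ← TensorProduct.map_comp,
      ← TensorProduct.map_comp, LinearMap.comp_assoc, h4]
  rw [← HQ.qha5, hs] at hT
  simp only [map_sum, TensorProduct.map_tmul, LinearEquiv.coe_coe] at hT
  rw [HQ.qha2] at key
  simp only [hs, hT, map_sum, TensorProduct.sum_tmul, TensorProduct.tmul_sum, LinearMap.sum_apply,
    TensorProduct.tensorTensorTensorComm_tmul, TensorProduct.map_tmul, TensorProduct.lift.tmul,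
    LinearMap.comp_apply, LinearEquiv.coe_coe, TensorProduct.comm_tmul, LinearMap.flip_apply,
    mm_tmul, LinearMap.id_apply, ← HQ.auto_mul] at key
  rw [key, Finset.sum_comm]

/-- The operators of `R` satisfy the Yang-Baxter equation on three modules over the algebra `H` with
the untwisted product `α⁻¹(hg)`. -/
theorem R_yang_baxter (HQ : QTHomHopf k H)
    (θU : H →ₗ[k] Module.End k U) (θV : H →ₗ[k] Module.End k V) (θW : H →ₗ[k] Module.End k W)
    (hU : ∀ h g, θU h * θU g = θU (HQ.auto.symm (HQ.mul h g)))
    (hV : ∀ h g, θV h * θV g = θV (HQ.auto.symm (HQ.mul h g)))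
    (hW : ∀ h g, θW h * θW g = θW (HQ.auto.symm (HQ.mul h g))) :
    (leg12 (rOp θU θV HQ.R) * leg13 (rOp θU θW HQ.R) * leg23 (rOp θV θW HQ.R) :
        Module.End k (U ⊗[k] (V ⊗[k] W))) =
      leg23 (rOp θV θW HQ.R) * leg13 (rOp θU θW HQ.R) * leg12 (rOp θU θV HQ.R) := by
  obtain ⟨s, hs⟩ := TensorProduct.exists_finset HQ.R
  -- `(x ⊗ y) ⊗ z` acts on `U ⊗ (V ⊗ W)` as `α⁻²(x) ⊗ (α⁻²(y) ⊗ α⁻¹(z))`.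
  let A := HQ.auto.symm.toLinearMap
  let Ξ : (H ⊗[k] H) ⊗[k] H →ₗ[k] Module.End k (U ⊗[k] (V ⊗[k] W)) :=
    TensorProduct.lift ((TensorProduct.mapBilinear (.id k) U (V ⊗[k] W) U (V ⊗[k] W)).compl₁₂
        (θU ∘ₗ A ∘ₗ A)
        (TensorProduct.lift ((TensorProduct.mapBilinear (.id k) V W V W).compl₁₂
          (θV ∘ₗ A ∘ₗ A) (θW ∘ₗ A)))) ∘ₗ (TensorProduct.assoc k H H H).toLinearMap
  have Ξ_tmul : ∀ x y z, Ξ ((x ⊗ₜ y) ⊗ₜ z) =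
      TensorProduct.map (θU (HQ.auto.symm (HQ.auto.symm x)))
        (TensorProduct.map (θV (HQ.auto.symm (HQ.auto.symm y))) (θW (HQ.auto.symm z))) := by
    intros; simp [Ξ, A]
  have key := congrArg Ξ (R_yang_baxter_aux HQ s hs)
  simp only [map_sum, Ξ_tmul, LinearEquiv.symm_apply_apply, ← hU, ← hV, ← hW] at key
  have e : ∀ (f f' f'' : Module.End k U) (g g' g'' : Module.End k V) (h h' h'' : Module.End k W),
      (TensorProduct.map f (TensorProduct.map g h) * TensorProduct.map f' (TensorProduct.map g' h')
        * TensorProduct.map f'' (TensorProduct.map g'' h'') : Module.End k (U ⊗[k] (V ⊗[k] W))) =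
      TensorProduct.map (f * f' * f'') (TensorProduct.map (g * g' * g'') (h * h' * h'')) := by
    intros
    simp only [← TensorProduct.map_mul]
  rw [hs, leg12_rOp, leg13_rOp, leg23_rOp]
  simp only [Finset.sum_mul, Finset.mul_sum, ← Module.End.one_eq_id, e, mul_one, one_mul]
  refine key.trans (Finset.sum_comm.trans ?_)
  exact (Finset.sum_congr rfl fun j _ => Finset.sum_comm).trans Finset.sum_comm

/-! ### Untwisting a Hom-Long dimodule -/

/-- The untwisted action `h ⊗ m ↦ h · μ⁻¹(m)`. -/
noncomputable def untwistAct (act : H →ₗ[k] M →ₗ[k] M) (a : M ≃ₗ[k] M) :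
    H →ₗ[k] Module.End k M :=
  LinearMap.lcomp k M a.symm.toLinearMap ∘ₗ act

theorem untwistAct_apply (act : H →ₗ[k] M →ₗ[k] M) (a : M ≃ₗ[k] M) (h : H) (m : M) :
    untwistAct act a h m = act h (a.symm m) := rfl

/-- The untwisted coaction `m ↦ m₋₁ ⊗ μ⁻¹(m₀)`. -/
noncomputable def untwistCoact (ρ : M →ₗ[k] B ⊗[k] M) (a : M ≃ₗ[k] M) : M →ₗ[k] B ⊗[k] M :=
  TensorProduct.map LinearMap.id a.symm.toLinearMap ∘ₗ ρ

/-- The braiding is the flip composed with the ordinary operators of `R` and of the form, taken for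
the untwisted action and coaction. -/
theorem braidL_eq (R : H ⊗[k] H) (form : B →ₗ[k] B →ₗ[k] k)
    (actM : H →ₗ[k] M →ₗ[k] M) (actN : H →ₗ[k] N →ₗ[k] N)
    (coactM : M →ₗ[k] B ⊗[k] M) (coactN : N →ₗ[k] B ⊗[k] N)
    (aM : M ≃ₗ[k] M) (aN : N ≃ₗ[k] N) :
    braidL R form actM actN coactM coactN aM aN =
      (TensorProduct.comm k M N).toLinearMap ∘ₗ
        (rOp (untwistAct actM aM) (untwistAct actN aN) R ∘ₗ
          formOp form (untwistCoact coactM aM) (untwistCoact coactN aN)) := by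
  ext m n
  simp only [TensorProduct.AlgebraTensorModule.curry_apply, LinearMap.restrictScalars_self,
    TensorProduct.curry_apply, LinearMap.comp_apply, formOp_tmul, braidL, untwistCoact,
    TensorProduct.map_tmul, LinearEquiv.coe_coe]
  generalize coactM m = tm
  generalize coactN n = tn
  induction tm with
  | zero => simp
  | add a b ha hb => simp only [map_add, LinearMap.add_apply, TensorProduct.add_tmul, ha, hb]
  | tmul x m =>
  induction tn with
  | zero => simp
  | add a b ha hb => simp only [map_add, TensorProduct.tmul_add, ha, hb]
  | tmul y n =>
  simp only [TensorProduct.map_tmul, TensorProduct.tensorTensorTensorComm_tmul,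
    TensorProduct.lift.tmul, TensorProduct.lid_tmul, pairing_tmul, map_smul, LinearMap.id_apply]
  congr 1
  induction R with
  | zero => simp [braidQT]
  | add a b ha hb =>
    simp only [map_add, LinearMap.add_apply, ← ha, ← hb]
    simp [braidQT]
  | tmul a b => simp [braidQT, rOp_tmul, untwistAct_apply]

variable {HA : HomBialgebra k H} {BA : HomBialgebra k B}

theorem LongDimodule.auto_symm_act (L : LongDimodule HA BA M) (h : H) (m : M) :
    L.auto.symm (L.act h m) = L.act (HA.auto.symm h) (L.auto.symm m) := by
  rw [LinearEquiv.symm_apply_eq, L.auto_act]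
  simp

theorem LongDimodule.coact_auto_symm (L : LongDimodule HA BA M) (m : M) :
    L.coact (L.auto.symm m) =
      TensorProduct.map BA.auto.symm.toLinearMap L.auto.symm.toLinearMap (L.coact m) := by
  obtain ⟨m, rfl⟩ := L.auto.surjective m
  rw [L.coact_auto, ← LinearMap.comp_apply, ← TensorProduct.map_comp]
  simp

theorem LongDimodule.untwistAct_mul (L : LongDimodule HA BA M) (h g : H) :
    untwistAct L.act L.auto h * untwistAct L.act L.auto g =
      untwistAct L.act L.auto (HA.auto.symm (HA.mul h g)) := by
  ext m
  apply L.auto.injective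
  simp only [Module.End.mul_apply, untwistAct_apply, L.auto_act, LinearEquiv.apply_symm_apply,
    L.act_act]

theorem LongDimodule.isComodEnd_untwistAct (L : LongDimodule HA BA M) (h : H) :
    IsComodEnd (untwistCoact L.coact L.auto) (untwistAct L.act L.auto h) := by
  intro m
  simp only [untwistCoact, LinearMap.comp_apply, untwistAct_apply, L.compat, L.coact_auto_symm]
  generalize L.coact m = t
  induction t with
  | zero => simp
  | add a b ha hb => simp only [map_add, ha, hb]
  | tmul x m => simp [untwistAct_apply, L.auto_symm_act]

/-- The untwisted coaction is coassociative for the untwisted comultiplication `Δ ∘ β⁻¹`. -/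
theorem LongDimodule.coactAgain_untwistCoact (L : LongDimodule HA BA M) (m : M) :
    coactAgain (untwistCoact L.coact L.auto) (untwistCoact L.coact L.auto m) =
      TensorProduct.map (BA.comul ∘ₗ BA.auto.symm.toLinearMap) LinearMap.id
        (untwistCoact L.coact L.auto m) := by
  let Φ : B ⊗[k] (B ⊗[k] M) →ₗ[k] (B ⊗[k] B) ⊗[k] M :=
    (TensorProduct.assoc k B B M).symm.toLinearMap ∘ₗ
      TensorProduct.map BA.auto.symm.toLinearMap (TensorProduct.map BA.auto.symm.toLinearMap
        (L.auto.symm.toLinearMap ∘ₗ L.auto.symm.toLinearMap))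
  have h₁ : ∀ t : B ⊗[k] M, coactAgain (untwistCoact L.coact L.auto)
      (TensorProduct.map LinearMap.id L.auto.symm.toLinearMap t) =
      Φ (TensorProduct.map BA.auto.toLinearMap L.coact t) := by
    intro t
    induction t with
    | zero => simp
    | add a b ha hb => simp only [map_add, ha, hb]
    | tmul x m =>
      simp only [TensorProduct.map_tmul, coactAgain_tmul, untwistCoact, LinearMap.comp_apply,
        LinearEquiv.coe_coe, L.coact_auto_symm, Φ, LinearMap.id_apply,
        LinearEquiv.symm_apply_apply]
      rw [← LinearMap.comp_apply (TensorProduct.map _ _), ← TensorProduct.map_comp,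
        LinearMap.id_comp]
  have hΔ : ∀ x, BA.comul (BA.auto.symm x) =
      TensorProduct.map BA.auto.symm.toLinearMap BA.auto.symm.toLinearMap (BA.comul x) := by
    intro x
    obtain ⟨x, rfl⟩ := BA.auto.surjective x
    rw [BA.comul_auto, ← LinearMap.comp_apply, ← TensorProduct.map_comp]
    simp
  have h₂ : ∀ t : B ⊗[k] M,
      TensorProduct.map (BA.comul ∘ₗ BA.auto.symm.toLinearMap) LinearMap.id
        (TensorProduct.map LinearMap.id L.auto.symm.toLinearMap t) =
      Φ (TensorProduct.assoc k B B M (TensorProduct.map BA.comul L.auto.toLinearMap t)) := by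
    intro t
    induction t with
    | zero => simp
    | add a b ha hb => simp only [map_add, ha, hb]
    | tmul x m =>
      simp only [TensorProduct.map_tmul, LinearMap.comp_apply, LinearEquiv.coe_coe, hΔ,
        LinearMap.id_apply]
      generalize BA.comul x = d
      induction d with
      | zero => simp
      | add a b ha hb => simp only [map_add, TensorProduct.add_tmul, ha, hb]
      | tmul y z => simp [Φ]
  have e : untwistCoact L.coact L.auto m =
    TensorProduct.map LinearMap.id L.auto.symm.toLinearMap (L.coact m) := rfl
  rw [e, h₁, h₂, L.hom_coassoc]

end Aux

/-- the categorical quantum Yang-Baxter equation for the Long braiding. -/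
theorem braid_quantum_yang_baxter
    {k H B U V W : Type*} [Field k]
    [AddCommGroup H] [Module k H] [AddCommGroup B] [Module k B]
    [AddCommGroup U] [Module k U] [AddCommGroup V] [Module k V] [AddCommGroup W] [Module k W]
    (HQ : QTHomHopf k H) (BC : CQTHomHopf k B)
    (LU : LongDimodule HQ.toHomBialgebra BC.toHomBialgebra U)
    (LV : LongDimodule HQ.toHomBialgebra BC.toHomBialgebra V)
    (LW : LongDimodule HQ.toHomBialgebra BC.toHomBialgebra W) :
    TensorProduct.map (LinearMap.id : W →ₗ[k] W)
          (braidL HQ.R BC.form LU.act LV.act LU.coact LV.coact LU.auto LV.auto) ∘ₗ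
        assocL LW.auto LV.auto ∘ₗ
        TensorProduct.map
          (braidL HQ.R BC.form LU.act LW.act LU.coact LW.coact LU.auto LW.auto)
          (LinearMap.id : V →ₗ[k] V) ∘ₗ
        assocLinv LU.auto LV.auto ∘ₗ
        TensorProduct.map (LinearMap.id : U →ₗ[k] U)
          (braidL HQ.R BC.form LV.act LW.act LV.coact LW.coact LV.auto LW.auto) ∘ₗ
        assocL LU.auto LW.auto
      = assocL LW.auto LU.auto ∘ₗ
          TensorProduct.map
            (braidL HQ.R BC.form LV.act LW.act LV.coact LW.coact LV.auto LW.auto)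
            (LinearMap.id : U →ₗ[k] U) ∘ₗ
          assocLinv LV.auto LU.auto ∘ₗ
          TensorProduct.map (LinearMap.id : V →ₗ[k] V)
            (braidL HQ.R BC.form LU.act LW.act LU.coact LW.coact LU.auto LW.auto) ∘ₗ
          assocL LV.auto LW.auto ∘ₗ
          TensorProduct.map
            (braidL HQ.R BC.form LU.act LV.act LU.coact LV.coact LU.auto LV.auto)
            (LinearMap.id : W →ₗ[k] W) := by
  have hR := R_yang_baxter HQ (untwistAct LU.act LU.auto) (untwistAct LV.act LV.auto)
    (untwistAct LW.act LW.auto) LU.untwistAct_mul LV.untwistAct_mul LW.untwistAct_mul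
  have hform := form_yang_baxter BC.form (BC.comul ∘ₗ BC.auto.symm.toLinearMap)
    (fun x y z => scalarL_eq_scalarR BC _ _ _)
    (untwistCoact LU.coact LU.auto) (untwistCoact LV.coact LV.auto)
    (untwistCoact LW.coact LW.auto) LU.coactAgain_untwistCoact LV.coactAgain_untwistCoact
    LW.coactAgain_untwistCoact
  have h := combined_yang_baxter BC.form _ _ _ _ _ _ LU.isComodEnd_untwistAct
    LV.isComodEnd_untwistAct LW.isComodEnd_untwistAct HQ.R hform hR
  simp only [braidL_eq]
  apply TensorProduct.ext_threefold
  intro u v w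
  simp only [LinearMap.comp_apply (TensorProduct.map _ _), LinearMap.comp_apply (assocL _ _),
    LinearMap.comp_apply (assocLinv _ _)]
  rw [lhs_eq, rhs_eq, h]
end

section
/- Let (H,α,R) be a quasitriangular Hom-Hopf algebra, (B,β,⟨|⟩) a coquasitriangular Hom-Hopf algebra, and (M,·,ρ,μ) an (H,B)-Hom-Long dimodule. Let H⊗B be the tensor Hom-bialgebra with componentwise multiplication (h⊗x)(g⊗y)=hg⊗xy, unit 1_H⊗1_B, and automorphism γ=α⊗β. Then the map (h⊗x)⇀m=⟨x|m₋₁⟩ α⁻³(h)·μ⁻¹(m₀) makes (M,⇀,μ) a left (H⊗B,γ)-Hom-module: (1_H⊗1_B)⇀m=μ(m), μ((h⊗x)⇀m)=(α(h)⊗β(x))⇀μ(m), and (α(h)⊗β(x))⇀((g⊗y)⇀m)=((h⊗x)(g⊗y))⇀μ(m). -/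
/-!
Write `h · m` for the action of `H` on `M`, `ρ(m) = m₋₁ ⊗ m₀` for the coaction, `α = HQ.auto`,
`β = BC.auto` and `μ = LM.auto`. On pure tensors `(h ⊗ x) ⇀ m = ⟨x|m₋₁⟩ α⁻³(h) · μ⁻¹(m₀)`.

* Unit: `⟨1|m₋₁⟩ 1 · μ⁻¹(m₀) = ε(m₋₁) m₀ = μ(m)`.
* Compatibility with `μ`: the form is `β`-invariant, and `μ` intertwines both action and coaction.
* Associativity: the dimodule condition gives
  `ρ(α⁻³(g) · μ⁻¹(m₀)) = (m₀)₋₁ ⊗ α⁻²(g) · μ⁻¹((m₀)₀)`, so the iterated action equals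
  `⟨y|m₋₁⟩ ⟨β(x)|(m₀)₋₁⟩ (α⁻³(h) α⁻³(g)) · μ⁻¹((m₀)₀)`. The action of the product on `μ(m)` equals
  `⟨xy|β(m₋₁)⟩ α⁻³(hg) · m₀ = ⟨β(y)|(m₋₁)₁⟩ ⟨β(x)|(m₋₁)₂⟩ α⁻³(hg) · m₀`. Both are the values of the
  single linear map `pairTwice` on the two sides of Hom-coassociativity of `ρ`.
-/

open TensorProduct

section LongAction

variable {k H B M : Type*} [Field k]
variable [AddCommGroup H] [Module k H] [AddCommGroup B] [Module k B]
variable [AddCommGroup M] [Module k M]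

/-- The map `b ⊗ m ↦ φ(b) f(m)`. -/
noncomputable def pairOnce (φ : B →ₗ[k] k) (f : M →ₗ[k] M) : B ⊗[k] M →ₗ[k] M :=
  (TensorProduct.lid k M).toLinearMap ∘ₗ TensorProduct.map φ f

@[simp]
lemma pairOnce_tmul (φ : B →ₗ[k] k) (f : M →ₗ[k] M) (b : B) (m : M) :
    pairOnce φ f (b ⊗ₜ[k] m) = φ b • f m := by
  simp [pairOnce]

/-- The map `b ⊗ (c ⊗ m) ↦ φ(b) ψ(c) f(m)`. -/
noncomputable def pairTwice (φ ψ : B →ₗ[k] k) (f : M →ₗ[k] M) : B ⊗[k] (B ⊗[k] M) →ₗ[k] M :=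
  (TensorProduct.lid k M).toLinearMap ∘ₗ TensorProduct.map φ (pairOnce ψ f)

@[simp]
lemma pairTwice_tmul (φ ψ : B →ₗ[k] k) (f : M →ₗ[k] M) (b : B) (t : B ⊗[k] M) :
    pairTwice φ ψ f (b ⊗ₜ[k] t) = φ b • pairOnce ψ f t := by
  simp [pairTwice]

lemma pairTwice_assoc (φ ψ : B →ₗ[k] k) (f : M →ₗ[k] M) (s : B ⊗[k] B) (m : M) :
    pairTwice φ ψ f (TensorProduct.assoc k B B M (s ⊗ₜ[k] m))
      = LinearMap.mul' k k (TensorProduct.map φ ψ s) • f m := by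
  induction s with
  | zero => simp
  | add s t hs ht => simp only [TensorProduct.add_tmul, map_add, hs, ht, add_smul]
  | tmul b c => simp [mul_smul]

lemma actHB_tmul (form : B →ₗ[k] B →ₗ[k] k) (aInv3 : H →ₗ[k] H)
    (act : H →ₗ[k] M →ₗ[k] M) (coact : M →ₗ[k] B ⊗[k] M) (muInv : M →ₗ[k] M)
    (h : H) (x : B) (m : M) :
    actHB form aInv3 act coact muInv (h ⊗ₜ[k] x) m
      = pairOnce (form x) (act (aInv3 h) ∘ₗ muInv) (coact m) := by
  simp only [actHB, TensorProduct.curry_apply, LinearMap.comp_apply, TensorProduct.map_tmul,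
    LinearEquiv.coe_coe, TensorProduct.comm_tmul]
  induction coact m with
  | zero => simp
  | add s t hs ht => simp only [TensorProduct.tmul_add, map_add, hs, ht]
  | tmul b n => simp

namespace LongDimodule

variable {HA : HomBialgebra k H} {BA : HomBialgebra k B} (LM : LongDimodule HA BA M)

lemma coact_symm (m : M) : LM.coact (LM.auto.symm m)
    = TensorProduct.map BA.auto.symm.toLinearMap LM.auto.symm.toLinearMap (LM.coact m) := by
  obtain ⟨n, rfl⟩ := LM.auto.surjective m
  rw [LM.coact_auto, LinearEquiv.symm_apply_apply]
  induction LM.coact n with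
  | zero => simp
  | add s t hs ht => rw [map_add, map_add, ← hs, ← ht]
  | tmul b n => simp

lemma symm_act (h : H) (m : M) :
    LM.auto.symm (LM.act h m) = LM.act (HA.auto.symm h) (LM.auto.symm m) := by
  rw [LinearEquiv.symm_apply_eq, LM.auto_act]
  simp

end LongDimodule

lemma HomBialgebra.symm_mul (HA : HomBialgebra k H) (h g : H) :
    HA.auto.symm (HA.mul h g) = HA.mul (HA.auto.symm h) (HA.auto.symm g) := by
  rw [LinearEquiv.symm_apply_eq, HA.auto_mul]
  simp

lemma HomBialgebra.symm_one (HA : HomBialgebra k H) : HA.auto.symm HA.one = HA.one := by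
  rw [LinearEquiv.symm_apply_eq, HA.auto_one]

end LongAction

/-- `(h ⊗ x) ⇀ m = ⟨x|m₋₁⟩ α⁻³(h)·μ⁻¹(m₀)` makes a Long dimodule `M`
into a left `(H ⊗ B, α ⊗ β)`-Hom-module. -/
theorem longDimodule_HB_action
    {k H B M : Type*} [Field k]
    [AddCommGroup H] [Module k H] [AddCommGroup B] [Module k B]
    [AddCommGroup M] [Module k M]
    (HQ : QTHomHopf k H) (BC : CQTHomHopf k B)
    (LM : LongDimodule HQ.toHomBialgebra BC.toHomBialgebra M) :
    ∃ act' : (H ⊗[k] B) →ₗ[k] M →ₗ[k] M,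
      act' = actHB BC.form
          (HQ.auto.symm.toLinearMap ∘ₗ HQ.auto.symm.toLinearMap ∘ₗ HQ.auto.symm.toLinearMap)
          LM.act LM.coact LM.auto.symm.toLinearMap ∧
      (∀ (h : H) (x : B) (m : M),
        act' (h ⊗ₜ[k] x) m
          = TensorProduct.lid k M
              (TensorProduct.map (BC.form x)
                (LM.act (HQ.auto.symm (HQ.auto.symm (HQ.auto.symm h))) ∘ₗ
                  LM.auto.symm.toLinearMap)
                (LM.coact m))) ∧
      (∀ m : M, act' (HQ.one ⊗ₜ[k] BC.one) m = LM.auto m) ∧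
      (∀ (h : H) (x : B) (m : M),
        LM.auto (act' (h ⊗ₜ[k] x) m) = act' (HQ.auto h ⊗ₜ[k] BC.auto x) (LM.auto m)) ∧
      (∀ (h g : H) (x y : B) (m : M),
        act' (HQ.auto h ⊗ₜ[k] BC.auto x) (act' (g ⊗ₜ[k] y) m)
          = act' (HQ.mul h g ⊗ₜ[k] BC.mul x y) (LM.auto m)) := by
  refine ⟨_, rfl, fun h x m => ?_, fun m => ?_, fun h x m => ?_, fun h g x y m => ?_⟩
  · rw [actHB_tmul]
    rfl
  · rw [actHB_tmul, ← LM.counit_coact]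
    induction LM.coact m with
    | zero => simp
    | add s t hs ht => simp only [map_add, hs, ht]
    | tmul b n => simp [HomBialgebra.symm_one, LM.one_act, BC.cha4a]
  · rw [actHB_tmul, actHB_tmul, LM.coact_auto]
    induction LM.coact m with
    | zero => simp
    | add s t hs ht => simp only [map_add, hs, ht]
    | tmul b n => simp [LM.auto_act, BC.cha5]
  · -- The common value of both sides is `Φ` applied to the two sides of Hom-coassociativity.
    let a3 : H → H := fun u => HQ.auto.symm (HQ.auto.symm (HQ.auto.symm u))
    let Φ := pairTwice (BC.form (BC.auto y)) (BC.form (BC.auto x))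
      (LM.act (HQ.mul (a3 h) (a3 g)) ∘ₗ LM.auto.symm.toLinearMap)
    have hL : actHB BC.form
          (HQ.auto.symm.toLinearMap ∘ₗ HQ.auto.symm.toLinearMap ∘ₗ HQ.auto.symm.toLinearMap)
          LM.act LM.coact LM.auto.symm.toLinearMap (HQ.auto h ⊗ₜ[k] BC.auto x)
          (pairOnce (BC.form y) (LM.act (a3 g) ∘ₗ LM.auto.symm.toLinearMap) (LM.coact m))
        = Φ (TensorProduct.map BC.auto.toLinearMap LM.coact (LM.coact m)) := by
      induction LM.coact m with
      | zero => simp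
      | add s t hs ht => simp only [map_add, hs, ht]
      | tmul b n =>
        simp only [pairOnce_tmul, map_smul, TensorProduct.map_tmul, LinearEquiv.coe_coe, Φ,
          pairTwice_tmul, BC.cha5]
        congr 1
        rw [actHB_tmul]
        simp only [LinearMap.comp_apply, LinearEquiv.coe_coe, LM.compat, LM.coact_symm]
        induction LM.coact n with
        | zero => simp
        | add s t hs ht => simp only [map_add, hs, ht]
        | tmul c p =>
          have key : LM.act (HQ.auto (a3 h)) (LM.act (a3 g) (LM.auto.symm (LM.auto.symm p)))
              = LM.act (HQ.mul (a3 h) (a3 g)) (LM.auto.symm p) := by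
            rw [LM.act_act, LinearEquiv.apply_symm_apply]
          simp [a3, LM.symm_act] at key ⊢
          rw [key]
    have hR : pairOnce (BC.form (BC.mul x y))
          (LM.act (HQ.mul (a3 h) (a3 g)) ∘ₗ LM.auto.symm.toLinearMap) (LM.coact (LM.auto m))
        = Φ (TensorProduct.assoc k B B M
            (TensorProduct.map BC.comul LM.auto.toLinearMap (LM.coact m))) := by
      rw [LM.coact_auto]
      induction LM.coact m with
      | zero => simp
      | add s t hs ht => simp only [map_add, hs, ht]
      | tmul b n =>
        simp only [TensorProduct.map_tmul, Φ, pairTwice_assoc, pairOnce_tmul,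
          LinearEquiv.coe_coe, BC.cha1]
    rw [actHB_tmul _ _ _ _ _ g y m, actHB_tmul _ _ _ _ _ (HQ.mul h g)]
    simp only [LinearMap.comp_apply, LinearEquiv.coe_coe, HomBialgebra.symm_mul]
    exact hL.trans ((congrArg Φ (LM.hom_coassoc m)).trans hR.symm)
end

section
/- Let (H,α,R) be a quasitriangular Hom-Hopf algebra, (B,β,⟨|⟩) a coquasitriangular Hom-Hopf algebra, and (M,·,ρ,μ) an (H,B)-Hom-Long dimodule. Let H⊗B be the tensor Hom-bialgebra with Δ(h⊗x)=(h₁⊗x₁)⊗(h₂⊗x₂), ε(h⊗x)=ε_H(h)ε_B(x), and automorphism γ=α⊗β. Then the map ρ̄:M→(H⊗B)⊗M, ρ̄(m)=(R²⊗β⁻³(m₋₁))⊗(R¹·μ⁻¹(m₀)), makes (M,ρ̄,μ) a left (H⊗B,γ)-Hom-comodule: writing ρ̄(m)=m_[-1]⊗m_[0], one has (ε_H⊗ε_B)(m_[-1])m_[0]=μ(m), γ(m_[-1])⊗μ(m_[0])=ρ̄(μ(m)) in the sense ρ̄(μ(m))=γ(m_[-1])⊗μ(m_[0]), and Δ(m_[-1])⊗μ(m_[0])=γ(m_[-1])⊗ρ̄(m_[0]).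 -/
/-!
Split `ρ̄` as `ρ` followed by `coactCore R : x ⊗ n ↦ (R² ⊗ β⁻³ x) ⊗ (R¹ · μ⁻¹ n)`. The counit and
automorphism identities follow from `R¹ ε(R²) = 1` and `(α ⊗ α) R = R` together with the
comodule axioms of `ρ`.

For coassociativity, both sides are values of the same linear map `rearrange`,
`(h ⊗ g ⊗ g') ⊗ (x ⊗ y ⊗ n) ↦ (g ⊗ β⁻³ x) ⊗ (g' ⊗ β⁻³ y) ⊗ h · μ⁻¹ n`.
The side with two coactions equals `rearrange` of
`(r¹R¹ ⊗ αR² ⊗ αr²) ⊗ (β m₋₁ ⊗ m₀₋₁ ⊗ m₀₀)`: the Long compatibility moves `ρ` past the action of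
`R¹`, and writing the outer copy of `R` as `αr¹ ⊗ αr²` lets Hom-associativity of the action
combine `αr¹ · (R¹ · -)` into `(r¹R¹) · μ(-)` (`map_coactHB_coactCore`). The side with the
comultiplication equals `rearrange` of `(αR¹ ⊗ Δ R²) ⊗ (Δ m₋₁ ⊗ μ m₀)`
(`assoc_comul_coactCore`). These arguments agree by `α(R¹) ⊗ Δ(R²) = R¹r¹ ⊗ αr² ⊗ αR²` and the Hom-coassociativity of `ρ`.
-/

open TensorProduct

section CoactionHB

variable {k H B M : Type*} [Field k]
variable [AddCommGroup H] [Module k H] [AddCommGroup B] [Module k B]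
variable [AddCommGroup M] [Module k M]

/-- The part of `ρ̄` applied after `ρ`, as a function of an arbitrary tensor `S` in place of `R`:
`x ⊗ n ↦ (S² ⊗ β⁻³ x) ⊗ (S¹ · μ⁻¹ n)`. -/
noncomputable def coactCore (S : H ⊗[k] H) (bInv3 : B →ₗ[k] B)
    (act : H →ₗ[k] M →ₗ[k] M) (muInv : M →ₗ[k] M) :
    B ⊗[k] M →ₗ[k] (H ⊗[k] B) ⊗[k] M :=
  TensorProduct.map (TensorProduct.map (LinearMap.id : H →ₗ[k] H) bInv3)
      (TensorProduct.lift act ∘ₗ TensorProduct.map (LinearMap.id : H →ₗ[k] H) muInv) ∘ₗ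
    (TensorProduct.tensorTensorTensorComm k H H B M).toLinearMap ∘ₗ
    TensorProduct.mk k (H ⊗[k] H) (B ⊗[k] M) (TensorProduct.comm k H H S)

lemma coactHB_apply (R : H ⊗[k] H) (bInv3 : B →ₗ[k] B) (act : H →ₗ[k] M →ₗ[k] M)
    (coact : M →ₗ[k] B ⊗[k] M) (muInv : M →ₗ[k] M) (m : M) :
    coactHB R bInv3 act coact muInv m = coactCore R bInv3 act muInv (coact m) := rfl

@[simp]
lemma coactCore_tmul (a b : H) (bInv3 : B →ₗ[k] B) (act : H →ₗ[k] M →ₗ[k] M)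
    (muInv : M →ₗ[k] M) (x : B) (n : M) :
    coactCore (a ⊗ₜ[k] b) bInv3 act muInv (x ⊗ₜ[k] n)
      = (b ⊗ₜ[k] bInv3 x) ⊗ₜ[k] act a (muInv n) := by
  simp [coactCore]

@[simp]
lemma coactCore_zero (bInv3 : B →ₗ[k] B) (act : H →ₗ[k] M →ₗ[k] M) (muInv : M →ₗ[k] M)
    (t : B ⊗[k] M) : coactCore (0 : H ⊗[k] H) bInv3 act muInv t = 0 := by
  simp [coactCore]

lemma coactCore_add (S T : H ⊗[k] H) (bInv3 : B →ₗ[k] B) (act : H →ₗ[k] M →ₗ[k] M)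
    (muInv : M →ₗ[k] M) (t : B ⊗[k] M) :
    coactCore (S + T) bInv3 act muInv t
      = coactCore S bInv3 act muInv t + coactCore T bInv3 act muInv t := by
  simp [coactCore]

/-- The linear map `(h ⊗ (g ⊗ g')) ⊗ (x ⊗ (y ⊗ n)) ↦ (g ⊗ β⁻³ x) ⊗ ((g' ⊗ β⁻³ y) ⊗ h · μ⁻¹ n)`
through which both sides of the coassociativity identity factor. -/
noncomputable def rearrange (bInv3 : B →ₗ[k] B)
    (act : H →ₗ[k] M →ₗ[k] M) (muInv : M →ₗ[k] M) :
    (H ⊗[k] (H ⊗[k] H)) ⊗[k] (B ⊗[k] (B ⊗[k] M)) →ₗ[k]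
      (H ⊗[k] B) ⊗[k] ((H ⊗[k] B) ⊗[k] M) :=
  TensorProduct.map (TensorProduct.map LinearMap.id bInv3)
      (TensorProduct.map (TensorProduct.map LinearMap.id bInv3)
          (TensorProduct.lift act ∘ₗ TensorProduct.map LinearMap.id muInv) ∘ₗ
        (TensorProduct.tensorTensorTensorComm k H H B M).toLinearMap) ∘ₗ
    (TensorProduct.tensorTensorTensorComm k H (H ⊗[k] H) B (B ⊗[k] M)).toLinearMap ∘ₗ
    TensorProduct.map
      ((TensorProduct.assoc k H H H).toLinearMap ∘ₗ
        (TensorProduct.comm k H (H ⊗[k] H)).toLinearMap)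
      LinearMap.id

@[simp]
lemma rearrange_tmul (bInv3 : B →ₗ[k] B) (act : H →ₗ[k] M →ₗ[k] M) (muInv : M →ₗ[k] M)
    (h g g' : H) (x y : B) (n : M) :
    rearrange bInv3 act muInv
        ((h ⊗ₜ[k] (g ⊗ₜ[k] g')) ⊗ₜ[k] (x ⊗ₜ[k] (y ⊗ₜ[k] n)))
      = (g ⊗ₜ[k] bInv3 x) ⊗ₜ[k] ((g' ⊗ₜ[k] bInv3 y) ⊗ₜ[k] act h (muInv n)) := by
  simp [rearrange]

variable {HA : HomBialgebra k H} {BA : HomBialgebra k B}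

/-- The linear map `β⁻³`. -/
noncomputable abbrev HomBialgebra.autoInv3 (BA : HomBialgebra k B) : B →ₗ[k] B :=
  BA.auto.symm.toLinearMap ∘ₗ BA.auto.symm.toLinearMap ∘ₗ BA.auto.symm.toLinearMap

lemma LongDimodule.coact_auto_symm_s12 (LM : LongDimodule HA BA M) (n : M) :
    LM.coact (LM.auto.symm n)
      = TensorProduct.map BA.auto.symm.toLinearMap LM.auto.symm.toLinearMap (LM.coact n) := by
  obtain ⟨n, rfl⟩ := LM.auto.surjective n
  rw [LM.coact_auto, ← LinearMap.comp_apply, ← TensorProduct.map_comp]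
  simp

lemma LongDimodule.coactCore_counit (LM : LongDimodule HA BA M) (S : H ⊗[k] H)
    (t : B ⊗[k] M) :
    TensorProduct.lid k M
        (TensorProduct.map (LinearMap.mul' k k ∘ₗ TensorProduct.map HA.counit BA.counit)
          (LinearMap.id : M →ₗ[k] M)
          (coactCore S BA.autoInv3 LM.act LM.auto.symm.toLinearMap t))
      = LM.act (TensorProduct.rid k H
            (TensorProduct.map (LinearMap.id : H →ₗ[k] H) HA.counit S))
          (LM.auto.symm (TensorProduct.lid k M
            (TensorProduct.map BA.counit (LinearMap.id : M →ₗ[k] M) t))) := by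
  have hc : ∀ x : B, BA.counit (BA.auto.symm x) = BA.counit x := fun x => by
    rw [← BA.counit_auto, LinearEquiv.apply_symm_apply]
  induction S with
  | zero => simp
  | add S T hS hT => simp only [coactCore_add, map_add, hS, hT, LinearMap.add_apply]
  | tmul a b =>
    induction t with
    | zero => simp
    | add s t hs ht => simp only [map_add, hs, ht]
    | tmul x n => simp [hc, mul_smul, smul_comm (HA.counit b)]

lemma LongDimodule.coactCore_auto (LM : LongDimodule HA BA M) (S : H ⊗[k] H)
    (t : B ⊗[k] M) :
    coactCore (TensorProduct.map HA.auto.toLinearMap HA.auto.toLinearMap S) BA.autoInv3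
        LM.act LM.auto.symm.toLinearMap
        (TensorProduct.map BA.auto.toLinearMap LM.auto.toLinearMap t)
      = TensorProduct.map (TensorProduct.map HA.auto.toLinearMap BA.auto.toLinearMap)
          LM.auto.toLinearMap
          (coactCore S BA.autoInv3 LM.act LM.auto.symm.toLinearMap t) := by
  induction S with
  | zero => simp
  | add S T hS hT => simp only [coactCore_add, map_add, hS, hT]
  | tmul a b =>
    induction t with
    | zero => simp
    | add s t hs ht => simp only [map_add, hs, ht]
    | tmul x n => simp [LM.auto_act]

/-- The side of coassociativity with two coactions, where the outer coaction uses `(α ⊗ α) T`. -/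
lemma LongDimodule.map_coactHB_coactCore (LM : LongDimodule HA BA M) (S T : H ⊗[k] H)
    (t : B ⊗[k] M) :
    TensorProduct.map (TensorProduct.map HA.auto.toLinearMap BA.auto.toLinearMap)
        (coactHB (TensorProduct.map HA.auto.toLinearMap HA.auto.toLinearMap T) BA.autoInv3
          LM.act LM.coact LM.auto.symm.toLinearMap)
        (coactCore S BA.autoInv3 LM.act LM.auto.symm.toLinearMap t)
      = rearrange BA.autoInv3 LM.act LM.auto.symm.toLinearMap
          (TensorProduct.map (TensorProduct.lift HA.mul)
              ((TensorProduct.comm k H H).toLinearMap ∘ₗ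
                TensorProduct.map HA.auto.toLinearMap HA.auto.toLinearMap)
              (TensorProduct.tensorTensorTensorComm k H H H H (T ⊗ₜ[k] S))
            ⊗ₜ[k] TensorProduct.map BA.auto.toLinearMap LM.coact t) := by
  induction S with
  | zero => simp
  | add S S' hS hS' =>
    simp only [coactCore_add, map_add, hS, hS', TensorProduct.tmul_add, TensorProduct.add_tmul]
  | tmul a b =>
    induction t with
    | zero => simp
    | add s t hs ht => simp only [map_add, hs, ht, TensorProduct.tmul_add]
    | tmul x n =>
      simp only [coactCore_tmul, TensorProduct.map_tmul, coactHB_apply, LM.compat,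
        LinearEquiv.coe_coe, LM.coact_auto_symm_s12]
      generalize LM.coact n = u
      induction u with
      | zero => simp
      | add u v hu hv => simp only [map_add, hu, hv, TensorProduct.tmul_add]
      | tmul y p =>
        induction T with
        | zero => simp
        | add T T' hT hT' =>
          simp only [coactCore_add, map_add, hT, hT', TensorProduct.tmul_add,
            TensorProduct.add_tmul]
        | tmul c d =>
          -- `μ⁻¹` of the inner action, in the form needed to apply `act_act`
          have hmu : ∀ q : M, LM.auto.symm (LM.act (HA.auto a) q)
              = LM.act a (LM.auto.symm q) := fun q => by
            rw [LinearEquiv.symm_apply_eq, LM.auto_act, LinearEquiv.apply_symm_apply]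
          simp [hmu, LM.act_act]

/-- The side of coassociativity with the comultiplication of `H ⊗ B`. -/
lemma LongDimodule.assoc_comul_coactCore (LM : LongDimodule HA BA M) (S : H ⊗[k] H)
    (t : B ⊗[k] M) :
    TensorProduct.assoc k (H ⊗[k] B) (H ⊗[k] B) M
        (TensorProduct.map
          ((TensorProduct.tensorTensorTensorComm k H H B B).toLinearMap ∘ₗ
            TensorProduct.map HA.comul BA.comul)
          LM.auto.toLinearMap
          (coactCore S BA.autoInv3 LM.act LM.auto.symm.toLinearMap t))
      = rearrange BA.autoInv3 LM.act LM.auto.symm.toLinearMap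
          (TensorProduct.map HA.auto.toLinearMap HA.comul S
            ⊗ₜ[k] TensorProduct.assoc k B B M
              (TensorProduct.map BA.comul LM.auto.toLinearMap t)) := by
  have hc : ∀ x : B, BA.comul (BA.auto.symm x)
      = TensorProduct.map BA.auto.symm.toLinearMap BA.auto.symm.toLinearMap (BA.comul x) := by
    intro x
    obtain ⟨x, rfl⟩ := BA.auto.surjective x
    rw [BA.comul_auto, ← LinearMap.comp_apply, ← TensorProduct.map_comp]
    simp
  induction S with
  | zero => simp
  | add S T hS hT => simp only [coactCore_add, map_add, hS, hT, TensorProduct.add_tmul]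
  | tmul a b =>
    induction t with
    | zero => simp
    | add s t hs ht => simp only [map_add, hs, ht, TensorProduct.tmul_add]
    | tmul x n =>
      simp only [coactCore_tmul, TensorProduct.map_tmul, LinearMap.comp_apply,
        LinearEquiv.coe_coe, hc, LM.auto_act, LinearEquiv.apply_symm_apply]
      generalize HA.comul b = u
      generalize BA.comul x = v
      induction u with
      | zero => simp
      | add u u' hu hu' =>
        simp only [map_add, hu, hu', TensorProduct.tmul_add, TensorProduct.add_tmul]
      | tmul b₁ b₂ =>
        induction v with
        | zero => simp
        | add v v' hv hv' =>
          simp only [map_add, hv, hv', TensorProduct.tmul_add, TensorProduct.add_tmul]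
        | tmul x₁ x₂ => simp

end CoactionHB

/-- `ρ̄(m) = (R² ⊗ β⁻³(m₋₁)) ⊗ (R¹·μ⁻¹(m₀))` makes a Long dimodule `M`
into a left `(H ⊗ B, α ⊗ β)`-Hom-comodule. -/
theorem longDimodule_HB_coaction
    {k H B M : Type*} [Field k]
    [AddCommGroup H] [Module k H] [AddCommGroup B] [Module k B]
    [AddCommGroup M] [Module k M]
    (HQ : QTHomHopf k H) (BC : CQTHomHopf k B)
    (LM : LongDimodule HQ.toHomBialgebra BC.toHomBialgebra M) :
    ∃ rhoBar : M →ₗ[k] (H ⊗[k] B) ⊗[k] M,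
      rhoBar = coactHB HQ.R
          (BC.auto.symm.toLinearMap ∘ₗ BC.auto.symm.toLinearMap ∘ₗ BC.auto.symm.toLinearMap)
          LM.act LM.coact LM.auto.symm.toLinearMap ∧
      (∀ m : M,
        TensorProduct.lid k M
            (TensorProduct.map
              (LinearMap.mul' k k ∘ₗ TensorProduct.map HQ.counit BC.counit)
              (LinearMap.id : M →ₗ[k] M) (rhoBar m))
          = LM.auto m) ∧
      (∀ m : M,
        rhoBar (LM.auto m)
          = TensorProduct.map (TensorProduct.map HQ.auto.toLinearMap BC.auto.toLinearMap)
              LM.auto.toLinearMap (rhoBar m)) ∧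
      (∀ m : M,
        TensorProduct.map (TensorProduct.map HQ.auto.toLinearMap BC.auto.toLinearMap)
            rhoBar (rhoBar m)
          = TensorProduct.assoc k (H ⊗[k] B) (H ⊗[k] B) M
              (TensorProduct.map
                ((TensorProduct.tensorTensorTensorComm k H H B B).toLinearMap ∘ₗ
                  TensorProduct.map HQ.comul BC.comul)
                LM.auto.toLinearMap (rhoBar m))) := by
  refine ⟨_, rfl, fun m => ?_, fun m => ?_, fun m => ?_⟩
  · rw [coactHB_apply, LM.coactCore_counit, HQ.qha1b, LM.counit_coact, LM.one_act]
    simp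
  · rw [coactHB_apply, coactHB_apply, LM.coact_auto, ← LM.coactCore_auto, HQ.qha5]
  · have key := LM.map_coactHB_coactCore HQ.R HQ.R (LM.coact m)
    rw [HQ.qha5] at key
    rw [coactHB_apply, LM.assoc_comul_coactCore, key, HQ.qha3, LM.hom_coassoc]
end

section
/- Let (H,α,R) be a quasitriangular Hom-Hopf algebra, (B,β,⟨|⟩) a coquasitriangular Hom-Hopf algebra, and (M,·,ρ,μ) an (H,B)-Hom-Long dimodule. Equip M with the left (H⊗B)-Hom-module action (h⊗x)⇀m=⟨x|m₋₁⟩ α⁻³(h)·μ⁻¹(m₀) and the left (H⊗B)-Hom-comodule coaction ρ̄(m)=m_[-1]⊗m_[0]=(R²⊗β⁻³(m₋₁))⊗(R¹·μ⁻¹(m₀)), where H⊗B is the tensor Hom-bialgebra with automorphism γ=α⊗β. Then the Hom-Yetter-Drinfeld compatibility condition holds: for all h∈H, x∈B, m∈M, (h₁⊗x₁)γ(m_[-1]) ⊗ ((α³(h₂)⊗β³(x₂))⇀m_[0]) = ((α²(h₁)⊗β²(x₁))⇀m)_[-1](h₂⊗x₂) ⊗ ((α²(h₁)⊗β²(x₁))⇀m)_[0].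 Hence M is a left-left Hom-Yetter-Drinfeld module over (H⊗B,γ). -/
/-!
Both sides of the Hom-Yetter-Drinfeld condition for `g = h ⊗ x` are brought to the shape
`(p ⊗ y) ⊗ α⁻¹(q)·m₀`. Applying the dimodule compatibility `ρ(h·m) = β(m₋₁) ⊗ α(h)·m₀`,
Hom-associativity of the action and the `(α ⊗ α)`-invariance of `R` and `β`-invariance of the
form, followed by coassociativity of `ρ`, one finds with `b = β⁻³(m₋₁)`

* left side: `q ⊗ p = h₂R¹ ⊗ h₁R²` and `y = x₁b₁⟨x₂|b₂⟩`;
* right side: `q ⊗ p = R¹h₁ ⊗ R²h₂` and `y = ⟨x₁|b₁⟩b₂x₂`.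

The two values of `q ⊗ p` agree by the quasi-cocommutativity axiom `qha4` of `R`, and the two
values of `y` agree by the quasi-commutativity axiom `cha3` of the form. The normal forms are
`left_side` and `right_side`; `pair_coassoc` is the coassociativity step. Elements `g` that are
not pure tensors follow by additivity.
-/

open TensorProduct

section Stmt13

variable {k H B M : Type*} [Field k]
  [AddCommGroup H] [Module k H] [AddCommGroup B] [Module k B]
  [AddCommGroup M] [Module k M]

/-- Multiplication of the tensor Hom-bialgebra `H ⊗ B`. -/
noncomputable def mulHB (HQ : QTHomHopf k H) (BC : CQTHomHopf k B) :
    (H ⊗[k] B) ⊗[k] (H ⊗[k] B) →ₗ[k] H ⊗[k] B :=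
  TensorProduct.map (TensorProduct.lift HQ.mul) (TensorProduct.lift BC.mul) ∘ₗ
    (TensorProduct.tensorTensorTensorComm k H B H B).toLinearMap

/-- Comultiplication of the tensor Hom-bialgebra `H ⊗ B`. -/
noncomputable def comulHB (HQ : QTHomHopf k H) (BC : CQTHomHopf k B) :
    (H ⊗[k] B) →ₗ[k] (H ⊗[k] B) ⊗[k] (H ⊗[k] B) :=
  (TensorProduct.tensorTensorTensorComm k H H B B).toLinearMap ∘ₗ
    TensorProduct.map HQ.comul BC.comul

/-- The automorphism `γ = α ⊗ β` of `H ⊗ B`. -/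
noncomputable def gammaHB (HQ : QTHomHopf k H) (BC : CQTHomHopf k B) :
    (H ⊗[k] B) →ₗ[k] H ⊗[k] B :=
  TensorProduct.map HQ.auto.toLinearMap BC.auto.toLinearMap

/-- The `(H ⊗ B)`-action `(h ⊗ x) ⇀ m = ⟨x|m₋₁⟩ α⁻³(h)·μ⁻¹(m₀)` on a Long dimodule. -/
noncomputable def actG (HQ : QTHomHopf k H) (BC : CQTHomHopf k B)
    (LM : LongDimodule HQ.toHomBialgebra BC.toHomBialgebra M) :
    (H ⊗[k] B) →ₗ[k] M →ₗ[k] M :=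
  actHB BC.form
    (HQ.auto.symm.toLinearMap ∘ₗ HQ.auto.symm.toLinearMap ∘ₗ HQ.auto.symm.toLinearMap)
    LM.act LM.coact LM.auto.symm.toLinearMap

/-- The `(H ⊗ B)`-coaction `ρ̄(m) = (R² ⊗ β⁻³(m₋₁)) ⊗ (R¹·μ⁻¹(m₀))` on a Long dimodule. -/
noncomputable def coactG (HQ : QTHomHopf k H) (BC : CQTHomHopf k B)
    (LM : LongDimodule HQ.toHomBialgebra BC.toHomBialgebra M) :
    M →ₗ[k] (H ⊗[k] B) ⊗[k] M :=
  coactHB HQ.R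
    (BC.auto.symm.toLinearMap ∘ₗ BC.auto.symm.toLinearMap ∘ₗ BC.auto.symm.toLinearMap)
    LM.act LM.coact LM.auto.symm.toLinearMap

/-- The Hom-Yetter-Drinfeld compatibility condition over `(H ⊗ B, γ)` for `g` and `m`:
`g₁ γ(m_[-1]) ⊗ (γ³(g₂) ⇀ m_[0]) = (γ²(g₁) ⇀ m)_[-1] g₂ ⊗ (γ²(g₁) ⇀ m)_[0]`. -/
noncomputable def HYDcond (HQ : QTHomHopf k H) (BC : CQTHomHopf k B)
    (LM : LongDimodule HQ.toHomBialgebra BC.toHomBialgebra M)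
    (g : H ⊗[k] B) (m : M) : Prop :=
  TensorProduct.map
      (mulHB HQ BC ∘ₗ
        TensorProduct.map (LinearMap.id : H ⊗[k] B →ₗ[k] H ⊗[k] B) (gammaHB HQ BC))
      (TensorProduct.lift (actG HQ BC LM) ∘ₗ
        TensorProduct.map (gammaHB HQ BC ∘ₗ gammaHB HQ BC ∘ₗ gammaHB HQ BC)
          (LinearMap.id : M →ₗ[k] M))
      (TensorProduct.tensorTensorTensorComm k (H ⊗[k] B) (H ⊗[k] B) (H ⊗[k] B) M
        (comulHB HQ BC g ⊗ₜ[k] coactG HQ BC LM m))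
    = TensorProduct.map
        (mulHB HQ BC ∘ₗ (TensorProduct.comm k (H ⊗[k] B) (H ⊗[k] B)).toLinearMap)
        (LinearMap.id : M →ₗ[k] M)
        ((TensorProduct.assoc k (H ⊗[k] B) (H ⊗[k] B) M).symm
          (TensorProduct.map (LinearMap.id : H ⊗[k] B →ₗ[k] H ⊗[k] B)
            (coactG HQ BC LM ∘ₗ TensorProduct.lift (actG HQ BC LM) ∘ₗ
              TensorProduct.map (gammaHB HQ BC ∘ₗ gammaHB HQ BC)
                (LinearMap.id : M →ₗ[k] M))
            (TensorProduct.assoc k (H ⊗[k] B) (H ⊗[k] B) M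
              (TensorProduct.map
                (TensorProduct.comm k (H ⊗[k] B) (H ⊗[k] B)).toLinearMap
                (LinearMap.id : M →ₗ[k] M) (comulHB HQ BC g ⊗ₜ[k] m)))))

/-- The pairing `S ⊗ (b ⊗ c) ↦ s₁b ⟨s₂|c⟩`, as a linear map in `b ⊗ c`. -/
noncomputable def pairL (BC : CQTHomHopf k B) (S : B ⊗[k] B) : B ⊗[k] B →ₗ[k] B :=
  (TensorProduct.rid k B).toLinearMap ∘ₗ
    TensorProduct.map (TensorProduct.lift BC.mul) (TensorProduct.lift BC.form) ∘ₗ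
    (TensorProduct.tensorTensorTensorComm k B B B B).toLinearMap ∘ₗ
    TensorProduct.mk k (B ⊗[k] B) (B ⊗[k] B) S

/-- The pairing `S ⊗ (b ⊗ c) ↦ ⟨s₁|b⟩ c s₂`, as a linear map in `b ⊗ c`. -/
noncomputable def pairR (BC : CQTHomHopf k B) (S : B ⊗[k] B) : B ⊗[k] B →ₗ[k] B :=
  (TensorProduct.lid k B).toLinearMap ∘ₗ
    TensorProduct.map (TensorProduct.lift BC.form)
      ((TensorProduct.lift BC.mul) ∘ₗ (TensorProduct.comm k B B).toLinearMap) ∘ₗ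
    (TensorProduct.tensorTensorTensorComm k B B B B).toLinearMap ∘ₗ
    TensorProduct.mk k (B ⊗[k] B) (B ⊗[k] B) S

/-- The common shape of both sides of the compatibility condition:
`(q ⊗ p, y ⊗ n) ↦ (p ⊗ y) ⊗ α⁻¹(q)·n`. -/
noncomputable def assemble (HQ : QTHomHopf k H) (BC : CQTHomHopf k B)
    (LM : LongDimodule HQ.toHomBialgebra BC.toHomBialgebra M)
    (P : H ⊗[k] H) (z : B ⊗[k] M) : (H ⊗[k] B) ⊗[k] M :=
  TensorProduct.map LinearMap.id
    (TensorProduct.lift LM.act ∘ₗ TensorProduct.map HQ.auto.symm.toLinearMap LinearMap.id)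
    (TensorProduct.tensorTensorTensorComm k H H B M (TensorProduct.comm k H H P ⊗ₜ[k] z))

/-- The componentwise product on `H ⊗ H`. -/
noncomputable def mul2 (HQ : QTHomHopf k H) (P Q : H ⊗[k] H) : H ⊗[k] H :=
  TensorProduct.map (TensorProduct.lift HQ.mul) (TensorProduct.lift HQ.mul)
    (TensorProduct.tensorTensorTensorComm k H H H H (P ⊗ₜ[k] Q))

/-- `β⁻³`. -/
noncomputable def betaInv3 (BC : CQTHomHopf k B) : B →ₗ[k] B :=
  BC.auto.symm.toLinearMap ∘ₗ BC.auto.symm.toLinearMap ∘ₗ BC.auto.symm.toLinearMap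

section Basic

variable (HQ : QTHomHopf k H) (BC : CQTHomHopf k B)
  (LM : LongDimodule HQ.toHomBialgebra BC.toHomBialgebra M)

@[simp] lemma pairL_tmul (s t b c : B) :
    pairL BC (s ⊗ₜ[k] t) (b ⊗ₜ[k] c) = BC.form t c • BC.mul s b := by
  simp [pairL]

@[simp] lemma pairR_tmul (s t b c : B) :
    pairR BC (s ⊗ₜ[k] t) (b ⊗ₜ[k] c) = BC.form s b • BC.mul c t := by
  simp [pairR]

lemma pairL_add (S S' : B ⊗[k] B) : pairL BC (S + S') = pairL BC S + pairL BC S' := by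
  ext; simp [pairL]

lemma pairR_add (S S' : B ⊗[k] B) : pairR BC (S + S') = pairR BC S + pairR BC S' := by
  ext; simp [pairR]

@[simp] lemma pairL_zero : pairL BC (0 : B ⊗[k] B) = 0 := by
  ext; simp [pairL]

@[simp] lemma pairR_zero : pairR BC (0 : B ⊗[k] B) = 0 := by
  ext; simp [pairR]

@[simp] lemma assemble_tmul (q p : H) (y : B) (n : M) :
    assemble HQ BC LM (q ⊗ₜ[k] p) (y ⊗ₜ[k] n)
      = (p ⊗ₜ[k] y) ⊗ₜ[k] LM.act (HQ.auto.symm q) n := by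
  simp [assemble]

lemma assemble_add_left (P P' : H ⊗[k] H) (z : B ⊗[k] M) :
    assemble HQ BC LM (P + P') z = assemble HQ BC LM P z + assemble HQ BC LM P' z := by
  simp [assemble, add_tmul]

lemma assemble_add_right (P : H ⊗[k] H) (z z' : B ⊗[k] M) :
    assemble HQ BC LM P (z + z') = assemble HQ BC LM P z + assemble HQ BC LM P z' := by
  simp [assemble, tmul_add]

@[simp] lemma assemble_smul_right (a : k) (P : H ⊗[k] H) (z : B ⊗[k] M) :
    assemble HQ BC LM P (a • z) = a • assemble HQ BC LM P z := by
  simp [assemble]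

@[simp] lemma assemble_zero_left (z : B ⊗[k] M) : assemble HQ BC LM 0 z = 0 := by
  simp [assemble]

@[simp] lemma assemble_zero_right (P : H ⊗[k] H) : assemble HQ BC LM P 0 = 0 := by
  simp [assemble]

@[simp] lemma mul2_tmul (a b c d : H) :
    mul2 HQ (a ⊗ₜ[k] b) (c ⊗ₜ[k] d) = HQ.mul a c ⊗ₜ[k] HQ.mul b d := by
  simp [mul2]

lemma mul2_add_left (P P' Q : H ⊗[k] H) :
    mul2 HQ (P + P') Q = mul2 HQ P Q + mul2 HQ P' Q := by
  simp [mul2, add_tmul]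

lemma mul2_add_right (P Q Q' : H ⊗[k] H) :
    mul2 HQ P (Q + Q') = mul2 HQ P Q + mul2 HQ P Q' := by
  simp [mul2, tmul_add]

@[simp] lemma mul2_zero_left (Q : H ⊗[k] H) : mul2 HQ 0 Q = 0 := by simp [mul2]

@[simp] lemma mul2_zero_right (P : H ⊗[k] H) : mul2 HQ P 0 = 0 := by simp [mul2]

@[simp] lemma betaInv3_apply (b : B) :
    betaInv3 BC b = BC.auto.symm (BC.auto.symm (BC.auto.symm b)) := rfl

lemma symm_mul (a b : H) :
    HQ.auto.symm (HQ.mul a b) = HQ.mul (HQ.auto.symm a) (HQ.auto.symm b) := by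
  rw [LinearEquiv.symm_apply_eq, HQ.auto_mul]; simp

lemma form_auto_left (x y : B) : BC.form (BC.auto x) y = BC.form x (BC.auto.symm y) := by
  rw [← BC.cha5 x]; simp

lemma comul_symm (b : B) : BC.comul (BC.auto.symm b)
    = TensorProduct.map BC.auto.symm.toLinearMap BC.auto.symm.toLinearMap (BC.comul b) := by
  obtain ⟨b, rfl⟩ := BC.auto.surjective b
  rw [BC.comul_auto, LinearEquiv.symm_apply_apply, ← LinearMap.comp_apply,
    ← TensorProduct.map_comp]
  simp

lemma comul_betaInv3 (b : B) : BC.comul (betaInv3 BC b)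
    = TensorProduct.map (betaInv3 BC) (betaInv3 BC) (BC.comul b) := by
  simp only [betaInv3, TensorProduct.map_comp, LinearMap.comp_apply, LinearEquiv.coe_coe,
    comul_symm]

lemma coact_symm (m : M) : LM.coact (LM.auto.symm m)
    = TensorProduct.map BC.auto.symm.toLinearMap LM.auto.symm.toLinearMap (LM.coact m) := by
  obtain ⟨m, rfl⟩ := LM.auto.surjective m
  rw [LM.coact_auto, LinearEquiv.symm_apply_apply, ← LinearMap.comp_apply,
    ← TensorProduct.map_comp]
  simp

lemma symm_act (h : H) (m : M) :
    LM.auto.symm (LM.act h m) = LM.act (HQ.auto.symm h) (LM.auto.symm m) := by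
  rw [LinearEquiv.symm_apply_eq, LM.auto_act]; simp

/-- Hom-associativity of the action, solved for the iterated action. -/
lemma act_act' (h h' : H) (m : M) :
    LM.act h (LM.act h' m) = LM.act (HQ.mul (HQ.auto.symm h) h') (LM.auto m) := by
  rw [← LM.act_act]; simp

/-- `ρ(h · μ⁻¹(n)) = n₋₁ ⊗ α(h) · μ⁻¹(n₀)`. -/
lemma coact_act_symm (h : H) (n : M) : LM.coact (LM.act h (LM.auto.symm n))
    = TensorProduct.map LinearMap.id (LM.act (HQ.auto h) ∘ₗ LM.auto.symm.toLinearMap)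
        (LM.coact n) := by
  rw [LM.compat, coact_symm, ← LinearMap.comp_apply, ← TensorProduct.map_comp]
  congr 2
  ext; simp

lemma actG_tmul (h : H) (x : B) (m : M) : actG HQ BC LM (h ⊗ₜ[k] x) m
    = TensorProduct.lid k M (TensorProduct.map (BC.form x)
        (LM.act (HQ.auto.symm (HQ.auto.symm (HQ.auto.symm h))) ∘ₗ LM.auto.symm.toLinearMap)
        (LM.coact m)) := by
  simp only [actG, actHB, TensorProduct.curry_apply, LinearMap.comp_apply,
    TensorProduct.map_tmul, LinearEquiv.coe_coe, TensorProduct.comm_tmul]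
  induction LM.coact m with
  | zero => simp
  | add a b ha hb => simp only [tmul_add, map_add, ha, hb]
  | tmul b n => simp

/-- The coaction formula with the R-matrix and the value `ρ(m)` freed to arbitrary tensors. -/
noncomputable def coactGen (Rr : H ⊗[k] H) (c : B ⊗[k] M) : (H ⊗[k] B) ⊗[k] M :=
  TensorProduct.map (TensorProduct.map (LinearMap.id : H →ₗ[k] H) (betaInv3 BC))
      (TensorProduct.lift LM.act ∘ₗ
        TensorProduct.map (LinearMap.id : H →ₗ[k] H) LM.auto.symm.toLinearMap)
    (TensorProduct.tensorTensorTensorComm k H H B M (TensorProduct.comm k H H Rr ⊗ₜ[k] c))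

lemma coactG_eq (m : M) : coactG HQ BC LM m = coactGen HQ BC LM HQ.R (LM.coact m) := rfl

@[simp] lemma coactGen_tmul (r r' : H) (b : B) (n : M) :
    coactGen HQ BC LM (r ⊗ₜ[k] r') (b ⊗ₜ[k] n)
      = (r' ⊗ₜ[k] betaInv3 BC b) ⊗ₜ[k] LM.act r (LM.auto.symm n) := by
  simp [coactGen]

lemma coactGen_add_left (P P' : H ⊗[k] H) (c : B ⊗[k] M) :
    coactGen HQ BC LM (P + P') c = coactGen HQ BC LM P c + coactGen HQ BC LM P' c := by
  simp [coactGen, add_tmul]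

lemma coactGen_add_right (P : H ⊗[k] H) (c c' : B ⊗[k] M) :
    coactGen HQ BC LM P (c + c') = coactGen HQ BC LM P c + coactGen HQ BC LM P c' := by
  simp [coactGen, tmul_add]

@[simp] lemma coactGen_zero_left (c : B ⊗[k] M) : coactGen HQ BC LM 0 c = 0 := by
  simp [coactGen]

@[simp] lemma coactGen_zero_right (P : H ⊗[k] H) : coactGen HQ BC LM P 0 = 0 := by
  simp [coactGen]

end Basic

section Sides

variable (HQ : QTHomHopf k H) (BC : CQTHomHopf k B)
  (LM : LongDimodule HQ.toHomBialgebra BC.toHomBialgebra M)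

/-- The left side `g₁γ(m_[-1]) ⊗ (γ³(g₂) ⇀ m_[0])` in normal form, before coassociativity is
used. The tensors `T`, `S`, `Rr`, `c` stand for `h₁ ⊗ h₂`, `x₁ ⊗ x₂`, `R` and `ρ(m)`. -/
lemma left_side (T : H ⊗[k] H) (S : B ⊗[k] B) (Rr : H ⊗[k] H) (c : B ⊗[k] M) :
    TensorProduct.map
      (mulHB HQ BC ∘ₗ
        TensorProduct.map (LinearMap.id : H ⊗[k] B →ₗ[k] H ⊗[k] B) (gammaHB HQ BC))
      (TensorProduct.lift (actG HQ BC LM) ∘ₗ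
        TensorProduct.map (gammaHB HQ BC ∘ₗ gammaHB HQ BC ∘ₗ gammaHB HQ BC)
          (LinearMap.id : M →ₗ[k] M))
      (TensorProduct.tensorTensorTensorComm k (H ⊗[k] B) (H ⊗[k] B) (H ⊗[k] B) M
        (TensorProduct.tensorTensorTensorComm k H H B B (T ⊗ₜ[k] S) ⊗ₜ[k]
          coactGen HQ BC LM Rr c))
    = assemble HQ BC LM
        (mul2 HQ (TensorProduct.comm k H H T)
          (TensorProduct.map HQ.auto.toLinearMap HQ.auto.toLinearMap Rr))
        (TensorProduct.map (pairL BC S ∘ₗ TensorProduct.map (betaInv3 BC) (betaInv3 BC))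
          LM.auto.symm.toLinearMap
          ((TensorProduct.assoc k B B M).symm
            (TensorProduct.map BC.auto.toLinearMap LM.coact c))) := by
  induction T with
  | zero => simp
  | add a b ha hb => simp only [add_tmul, map_add, ha, hb, mul2_add_left, assemble_add_left]
  | tmul h1 h2 =>
  induction S with
  | zero => simp [TensorProduct.map_zero_left]
  | add a b ha hb => simp only [add_tmul, tmul_add, map_add, ha, hb, pairL_add,
      LinearMap.add_comp, TensorProduct.map_add_left, LinearMap.add_apply, assemble_add_right]
  | tmul x1 x2 =>
  induction Rr with
  | zero => simp
  | add a b ha hb => simp only [tmul_add, map_add, ha, hb, coactGen_add_left, mul2_add_right,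
      assemble_add_left]
  | tmul r r' =>
  induction c with
  | zero => simp
  | add a b ha hb => simp only [tmul_add, map_add, ha, hb, coactGen_add_right,
      assemble_add_right]
  | tmul b n =>
  simp only [coactGen_tmul, TensorProduct.tensorTensorTensorComm_tmul, TensorProduct.map_tmul,
    LinearMap.comp_apply, gammaHB, mulHB, LinearEquiv.coe_coe, TensorProduct.lift.tmul,
    LinearMap.id_apply, actG_tmul, coact_act_symm, TensorProduct.comm_tmul, mul2_tmul,
    LinearEquiv.symm_apply_apply]
  induction LM.coact n with
  | zero => simp
  | add a b ha hb => simp only [tmul_add, map_add, ha, hb, assemble_add_right]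
  | tmul b' n' =>
  simp [form_auto_left, act_act', symm_act, symm_mul, ← smul_tmul']

/-- The right side `(γ²(g₁) ⇀ m)_[-1] g₂ ⊗ (γ²(g₁) ⇀ m)_[0]` in normal form, before
coassociativity is used. The tensors `T`, `S` stand for `h₁ ⊗ h₂`, `x₁ ⊗ x₂`. -/
lemma right_side (T : H ⊗[k] H) (S : B ⊗[k] B) (m : M) :
    TensorProduct.map
        (mulHB HQ BC ∘ₗ (TensorProduct.comm k (H ⊗[k] B) (H ⊗[k] B)).toLinearMap)
        (LinearMap.id : M →ₗ[k] M)
        ((TensorProduct.assoc k (H ⊗[k] B) (H ⊗[k] B) M).symm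
          (TensorProduct.map (LinearMap.id : H ⊗[k] B →ₗ[k] H ⊗[k] B)
            (coactG HQ BC LM ∘ₗ TensorProduct.lift (actG HQ BC LM) ∘ₗ
              TensorProduct.map (gammaHB HQ BC ∘ₗ gammaHB HQ BC)
                (LinearMap.id : M →ₗ[k] M))
            (TensorProduct.assoc k (H ⊗[k] B) (H ⊗[k] B) M
              (TensorProduct.map
                (TensorProduct.comm k (H ⊗[k] B) (H ⊗[k] B)).toLinearMap
                (LinearMap.id : M →ₗ[k] M)
                (TensorProduct.tensorTensorTensorComm k H H B B (T ⊗ₜ[k] S) ⊗ₜ[k] m)))))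
    = assemble HQ BC LM (mul2 HQ HQ.R T)
        (TensorProduct.map (pairR BC S ∘ₗ TensorProduct.map (betaInv3 BC) (betaInv3 BC))
          LM.auto.symm.toLinearMap
          ((TensorProduct.assoc k B B M).symm
            (TensorProduct.map BC.auto.toLinearMap LM.coact (LM.coact m)))) := by
  induction T with
  | zero => simp
  | add a b ha hb => simp only [add_tmul, map_add, ha, hb, mul2_add_right, assemble_add_left]
  | tmul h1 h2 =>
  induction S with
  | zero => simp [TensorProduct.map_zero_left]
  | add a b ha hb => simp only [add_tmul, tmul_add, map_add, ha, hb, pairR_add,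
      LinearMap.add_comp, TensorProduct.map_add_left, LinearMap.add_apply, assemble_add_right]
  | tmul x1 x2 =>
  simp only [TensorProduct.tensorTensorTensorComm_tmul, TensorProduct.map_tmul,
    LinearMap.comp_apply, gammaHB, LinearEquiv.coe_coe, TensorProduct.lift.tmul,
    LinearMap.id_apply, actG_tmul, TensorProduct.comm_tmul, TensorProduct.assoc_tmul]
  induction LM.coact m with
  | zero => simp
  | add a b ha hb => simp only [tmul_add, map_add, ha, hb, assemble_add_right]
  | tmul b n =>
  simp only [TensorProduct.map_tmul, TensorProduct.lid_tmul, map_smul, LinearMap.comp_apply,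
    coactG_eq, LinearEquiv.coe_coe, coact_act_symm]
  induction HQ.R with
  | zero => simp
  | add a b ha hb => simp only [tmul_add, smul_add, map_add, ha, hb, coactGen_add_left,
      mul2_add_left, assemble_add_left]
  | tmul r r' =>
  induction LM.coact n with
  | zero => simp
  | add a b ha hb => simp only [tmul_add, smul_add, map_add, ha, hb, coactGen_add_right,
      assemble_add_right]
  | tmul b' n' =>
  simp [form_auto_left, act_act', symm_act, symm_mul, ← smul_tmul', mulHB]

/-- Coassociativity of `ρ` lets the two legs of `B` in the normal forms come from a single
`Δ(β⁻³(m₋₁))`. -/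
lemma pair_coassoc (Q : B ⊗[k] B →ₗ[k] B) (m : M) :
    TensorProduct.map (Q ∘ₗ TensorProduct.map (betaInv3 BC) (betaInv3 BC))
      LM.auto.symm.toLinearMap
      ((TensorProduct.assoc k B B M).symm
        (TensorProduct.map BC.auto.toLinearMap LM.coact (LM.coact m)))
    = TensorProduct.map (Q ∘ₗ BC.comul ∘ₗ betaInv3 BC) LinearMap.id (LM.coact m) := by
  rw [LM.hom_coassoc, LinearEquiv.symm_apply_apply, ← LinearMap.comp_apply,
    ← TensorProduct.map_comp]
  congr 2
  · ext b
    simp only [LinearMap.comp_apply, comul_betaInv3]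
  · ext; simp

end Sides

/-- a Long dimodule, with the `(H ⊗ B)`-action and coaction above, satisfies
the Hom-Yetter-Drinfeld compatibility condition; hence it is a left-left
Hom-Yetter-Drinfeld module over `(H ⊗ B, γ)`. -/
theorem longDimodule_is_HYD
    (HQ : QTHomHopf k H) (BC : CQTHomHopf k B)
    (LM : LongDimodule HQ.toHomBialgebra BC.toHomBialgebra M) :
    (∀ (h : H) (x : B) (m : M), HYDcond HQ BC LM (h ⊗ₜ[k] x) m) ∧
    (∀ (g : H ⊗[k] B) (m : M), HYDcond HQ BC LM g m) := by
  have key : ∀ (h : H) (x : B) (m : M), HYDcond HQ BC LM (h ⊗ₜ[k] x) m := by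
    intro h x m
    have hR : mul2 HQ (TensorProduct.comm k H H (HQ.comul h)) HQ.R
        = mul2 HQ HQ.R (HQ.comul h) := HQ.qha4 h
    have hB : pairL BC (BC.comul x) ∘ₗ BC.comul ∘ₗ betaInv3 BC
        = pairR BC (BC.comul x) ∘ₗ BC.comul ∘ₗ betaInv3 BC :=
      LinearMap.ext fun b => (BC.cha3 x (betaInv3 BC b)).symm
    have hL := left_side HQ BC LM (HQ.comul h) (BC.comul x) HQ.R (LM.coact m)
    have hRt := right_side HQ BC LM (HQ.comul h) (BC.comul x) m
    rw [pair_coassoc, HQ.qha5, hR, hB] at hL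
    rw [pair_coassoc] at hRt
    exact hL.trans hRt.symm
  refine ⟨key, fun g m => ?_⟩
  induction g with
  | zero => simp [HYDcond]
  | tmul h x => exact key h x m
  | add a b ha hb =>
    unfold HYDcond at ha hb ⊢
    simp only [map_add, add_tmul, ha, hb]

end Stmt13
end
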